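/- Let q be an odd prime power and let (n(g))_{g ≥ 1} be a sequence of even positive integers satisfying n(g) ≥ 3·log_q(g) for all large g and n(g)/g^{2/3} → 0 as g → ∞. For each g, let χ_2 be the quadratic character of F_{q^{n(g)}}. Then, as g → ∞, the quantity (q^{−n(g)/2} / |F̂_g|) · Σ_{(f1,f2,f3) ∈ F̂_g} Σ_{x ∈ F_{q^{n(g)}}} [ χ_2((f1·f3)(x)) + χ_2((f2·f3)(x)) + χ_2((f1·f2)(x)) ] tends to 3, where |F̂_g| denotes the cardinality of F̂_g and polynomials are evaluated at x via the inclusion F_q ⊆ F_{q^{n(g)}}. -/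

import Mathlib

open Polynomial Classical

noncomputable section

/-- Quadratic character of a field `K`: 1 on nonzero squares, -1 on nonsquares, 0 at 0. -/
def quadCharFn (K : Type*) [Field K] (a : K) : ℤ :=
  if a = 0 then 0 else if IsSquare a then 1 else -1

/-- Quadratic residue symbol modulo `P`: 1 if `F` is a nonzero square mod `P`,
-1 if a nonsquare, 0 if `P ∣ F`. -/
def chiP {Fq : Type*} [Field Fq] (P F : Fq[X]) : ℤ :=
  if P ∣ F then 0 else if ∃ G, P ∣ (F - G ^ 2) then 1 else -1

/-- The genus function `L(d1,d2,d3)`. -/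
def Lg (d1 d2 d3 : ℕ) : ℕ :=
  if Even (d1 + d3) ∧ Even (d2 + d3) then d1 + d2 + d3 else d1 + d2 + d3 + 1

/-- The parameter set `F̂_g` of triples of square-free pairwise coprime polynomials,
`f3` monic, satisfying the genus condition and avoiding the degenerate degrees. -/
def FhatSet (Fq : Type*) [Field Fq] (g : ℕ) : Set (Fq[X] × Fq[X] × Fq[X]) :=
  {t | Squarefree t.1 ∧ Squarefree t.2.1 ∧ Squarefree t.2.2 ∧
       IsCoprime t.1 t.2.1 ∧ IsCoprime t.1 t.2.2 ∧ IsCoprime t.2.1 t.2.2 ∧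
       t.2.2.Monic ∧
       Lg t.1.natDegree t.2.1.natDegree t.2.2.natDegree = g + 3 ∧
       ({t.1.natDegree, t.2.1.natDegree, t.2.2.natDegree} : Multiset ℕ) ≠ {g + 3, 0, 0} ∧
       ({t.1.natDegree, t.2.1.natDegree, t.2.2.natDegree} : Multiset ℕ) ≠ {g + 2, 0, 0}}

/-- The parameter set `F_g`: triples in `F̂_g` with all three polynomials monic. -/
def FSet (Fq : Type*) [Field Fq] (g : ℕ) : Set (Fq[X] × Fq[X] × Fq[X]) :=
  {t | t ∈ FhatSet Fq g ∧ t.1.Monic ∧ t.2.1.Monic}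

end

/-!
Write `n = 2m` and `q = #F`. By the symmetry of `F̂_g` in its three entries, and because constants
of `F` are squares in `K`, it suffices to average `∑ x, χ₂((f₁ f₂)(x))` over monic triples.

If `x` lies in the subfield of `K` of cardinality `q ^ m`, then every value `f(x)` is a square in
`K`, so up to zeros of `f₁ f₂` these points contribute the main term `q ^ m`.

For the remaining points there are two cases. If `deg f₁` and `deg f₂` are both smaller than `12m`,
the Weil bound, proved by Stepanov's method, gives `O(m q ^ m)` for each triple. Only `O(m ^ 2)`
pairs of degrees are of this kind, whereas the family has at least `c g ^ 2 q ^ g` members, so this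
is negligible when `m ^ 3 = o(g ^ 2)`. If one of the degrees is larger, the character
`f ↦ χ₂(f(x))` is nontrivial and sums to zero over the monic polynomials of degree at least `n`;
sieving for squarefreeness and coprimality turns this into a power saving.

The lower bound for the size of the family comes from polynomials congruent to `1` modulo the
product of the primes of degree at most `5`: a prime dividing such a polynomial has degree greater
than `5`, so a union bound over these primes leaves a positive proportion of admissible triples.
-/

section PolynomialFinsets

variable (F : Type*) [Field F] [Fintype F]

/-- The finite set of polynomials of degree less than `d` over a finite field. -/
noncomputable def polysOfDegreeLT (d : ℕ) : Finset F[X] :=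
  Finset.univ.map ⟨fun v : Fin d → F => ((degreeLTEquiv F d).symm v : F[X]),
    Subtype.val_injective.comp (degreeLTEquiv F d).symm.injective⟩

/-- The finite set of monic polynomials of degree `d` over a finite field. -/
noncomputable def monicsOfDegree (d : ℕ) : Finset F[X] :=
  Finset.univ.map ⟨fun v : Fin d → F =>
      ((monicEquivDegreeLT d).symm ((degreeLTEquiv F d).symm v)).1,
    Subtype.val_injective.comp
      ((monicEquivDegreeLT d).symm.injective.comp (degreeLTEquiv F d).symm.injective)⟩

variable {F}

lemma mem_polysOfDegreeLT {d : ℕ} {f : F[X]} : f ∈ polysOfDegreeLT F d ↔ f.degree < d := by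
  simp only [polysOfDegreeLT, Finset.mem_map, Finset.mem_univ, true_and,
    Function.Embedding.coeFn_mk]
  constructor
  · rintro ⟨v, rfl⟩
    exact mem_degreeLT.1 ((degreeLTEquiv F d).symm v).2
  · intro hf
    exact ⟨degreeLTEquiv F d ⟨f, mem_degreeLT.2 hf⟩, by simp⟩

lemma mem_polysOfDegreeLT_of_natDegree_lt {d : ℕ} {f : F[X]} (hf : f.natDegree < d) :
    f ∈ polysOfDegreeLT F d :=
  mem_polysOfDegreeLT.2 (degree_le_natDegree.trans_lt (by exact_mod_cast hf))

lemma natDegree_lt_of_mem_polysOfDegreeLT {d : ℕ} {f : F[X]} (hf : f ∈ polysOfDegreeLT F d)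
    (h0 : f ≠ 0) : f.natDegree < d :=
  (natDegree_lt_iff_degree_lt h0).2 (mem_polysOfDegreeLT.1 hf)

lemma natDegree_le_of_mem_polysOfDegreeLT {d : ℕ} {f : F[X]} (hf : f ∈ polysOfDegreeLT F d) :
    f.natDegree ≤ d - 1 := by
  rcases eq_or_ne f 0 with rfl | h0
  · simp
  · exact Nat.le_sub_one_of_lt (natDegree_lt_of_mem_polysOfDegreeLT hf h0)

lemma sub_mem_polysOfDegreeLT {d : ℕ} {f g : F[X]} (hf : f ∈ polysOfDegreeLT F d)
    (hg : g ∈ polysOfDegreeLT F d) : f - g ∈ polysOfDegreeLT F d := by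
  simp only [mem_polysOfDegreeLT, ← mem_degreeLT] at *
  exact sub_mem hf hg

lemma card_polysOfDegreeLT (d : ℕ) : (polysOfDegreeLT F d).card = Fintype.card F ^ d := by
  simp [polysOfDegreeLT]

lemma mem_monicsOfDegree {d : ℕ} {f : F[X]} :
    f ∈ monicsOfDegree F d ↔ f.Monic ∧ f.natDegree = d := by
  simp only [monicsOfDegree, Finset.mem_map, Finset.mem_univ, true_and,
    Function.Embedding.coeFn_mk]
  constructor
  · rintro ⟨v, rfl⟩
    exact ((monicEquivDegreeLT d).symm ((degreeLTEquiv F d).symm v)).2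
  · intro hf
    exact ⟨degreeLTEquiv F d (monicEquivDegreeLT d ⟨f, hf⟩), by simp⟩

lemma card_monicsOfDegree (d : ℕ) : (monicsOfDegree F d).card = Fintype.card F ^ d := by
  simp [monicsOfDegree]

end PolynomialFinsets

section Stepanov

lemma eq_zero_of_sq_eq_squarefree_mul_sq {R : Type*} [CommRing R] [IsDomain R]
    [IsIntegrallyClosed R] {g a b : R} (hg : Squarefree g) (hunit : ¬ IsUnit g)
    (h : a ^ 2 = g * b ^ 2) : b = 0 := by
  by_contra hb
  obtain ⟨c, rfl⟩ : b ∣ a :=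
    (IsIntegrallyClosed.pow_dvd_pow_iff two_ne_zero).1 ⟨g, by rw [h, mul_comm]⟩
  have hgc : g = c * c :=
    mul_right_cancel₀ (pow_ne_zero 2 hb) (by rw [← h]; ring)
  have hc : IsUnit c := hg c (dvd_of_eq hgc.symm)
  exact hunit (hgc ▸ hc.mul hc)

variable {K : Type*} [Field K]

lemma X_pow_dvd_pow_sub_C_pow {r : ℕ} (φ : K[X] →+* K[X]) (hφ : ∀ a, φ a = a ^ r) (f : K[X]) :
    X ^ r ∣ f ^ r - C (f.coeff 0 ^ r) := by
  rw [C_pow, ← hφ f, ← hφ (C _), ← map_sub, hφ]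
  exact pow_dvd_pow_of_dvd X_dvd_sub_C r

/- Multiplying by `a - f ^ (k + 1) * b` and using `f ^ r ≡ f(0) ^ r` modulo `X ^ r` turns the
divisibility into one of `a ^ 2 - f(0) ^ r * f * b ^ 2`, whose degree is less than `r`. -/
lemma eq_zero_of_X_pow_dvd_add_pow_mul {k : ℕ} (φ : K[X] →+* K[X])
    (hφ : ∀ a, φ a = a ^ (2 * k + 1)) {f a b : K[X]} (hf : Squarefree f) (hD : 1 ≤ f.natDegree)
    (hf0 : f.coeff 0 ≠ 0) (ha : 2 * a.natDegree < 2 * k + 1)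
    (hb : f.natDegree + 2 * b.natDegree < 2 * k + 1)
    (hdvd : X ^ (2 * k + 1) ∣ a + f ^ (k + 1) * b) : a = 0 ∧ b = 0 := by
  set c := f.coeff 0 ^ (2 * k + 1)
  have hc0 : c ≠ 0 := pow_ne_zero _ hf0
  have hdvd_sq : X ^ (2 * k + 1) ∣ a ^ 2 - C c * f * b ^ 2 := by
    have h := dvd_add (hdvd.mul_right (a - f ^ (k + 1) * b))
      ((X_pow_dvd_pow_sub_C_pow φ hφ f).mul_right (f * b ^ 2))
    convert h using 1
    ring
  have hdeg : (a ^ 2 - C c * f * b ^ 2).natDegree < 2 * k + 1 := by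
    refine (natDegree_sub_le _ _).trans_lt (max_lt (by rwa [natDegree_pow]) ?_)
    rw [mul_assoc]
    refine (natDegree_C_mul_le _ _).trans_lt (natDegree_mul_le.trans_lt ?_)
    rwa [natDegree_pow]
  have hsq : a ^ 2 = C c * f * b ^ 2 := by
    refine sub_eq_zero.1 (eq_zero_of_dvd_of_natDegree_lt hdvd_sq ?_)
    rwa [natDegree_X_pow]
  have hassoc : Associated f (C c * f) :=
    associated_unit_mul_right f (C c) (isUnit_C.2 hc0.isUnit)
  have hb0 : b = 0 := by
    refine eq_zero_of_sq_eq_squarefree_mul_sq (hassoc.squarefree_iff.1 hf) ?_ hsq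
    rw [← hassoc.isUnit_iff]
    exact fun hu => by simp [natDegree_eq_zero_of_isUnit hu] at hD
  exact ⟨by simpa [hb0] using hsq, hb0⟩

/-- Stepanov's auxiliary polynomial for `f`, built from the coefficient polynomials `u j`; it
vanishes wherever `f ^ ((r ^ 2 - 1) / 2)` takes a prescribed value, `r = 2 * k + 1`. -/
noncomputable def stepanovPoly (k : ℕ) (f : K[X]) {J : ℕ} (u : Fin J → K[X] × K[X]) : K[X] :=
  ∑ j : Fin J, X ^ ((2 * k + 1) * (j : ℕ)) * ((u j).1 + f ^ (k + 1) * (u j).2)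

lemma stepanovPoly_ne_zero {k : ℕ} (φ : K[X] →+* K[X]) (hφ : ∀ a, φ a = a ^ (2 * k + 1))
    {f : K[X]} (hf : Squarefree f) (hD : 1 ≤ f.natDegree) (hf0 : f.coeff 0 ≠ 0) {J : ℕ}
    {u : Fin J → K[X] × K[X]} (hu : u ≠ 0) (hu₁ : ∀ j, 2 * (u j).1.natDegree < 2 * k + 1)
    (hu₂ : ∀ j, f.natDegree + 2 * (u j).2.natDegree < 2 * k + 1) :
    stepanovPoly k f u ≠ 0 := by
  intro h0
  refine hu (funext fun j => ?_)
  induction j using WellFoundedLT.induction with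
  | ind j ih =>
  set term : Fin J → K[X] := fun i =>
    X ^ ((2 * k + 1) * (i : ℕ)) * ((u i).1 + f ^ (k + 1) * (u i).2) with hterm
  have hrest : X ^ ((2 * k + 1) * ((j : ℕ) + 1)) ∣ ∑ i ∈ Finset.univ.erase j, term i := by
    refine Finset.dvd_sum fun i hi => ?_
    rcases lt_or_gt_of_ne (Finset.ne_of_mem_erase hi) with hlt | hgt
    · simp [hterm, ih i hlt]
    · exact (pow_dvd_pow _ (Nat.mul_le_mul_left _ hgt)).mul_right _
  have hj : X ^ ((2 * k + 1) * ((j : ℕ) + 1)) ∣ term j := by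
    have hsplit := Finset.sum_erase_add Finset.univ term (Finset.mem_univ j)
    rw [← dvd_add_right hrest, hsplit]
    exact (show ∑ i, term i = 0 from h0) ▸ dvd_zero _
  rw [mul_add, pow_add, mul_one] at hj
  have hlow : X ^ (2 * k + 1) ∣ (u j).1 + f ^ (k + 1) * (u j).2 :=
    (mul_dvd_mul_iff_left (pow_ne_zero _ X_ne_zero)).1 hj
  have hzero := eq_zero_of_X_pow_dvd_add_pow_mul φ hφ hf hD hf0 (hu₁ j) (hu₂ j) hlow
  exact Prod.ext hzero.1 hzero.2

lemma natDegree_stepanovPoly_le {k : ℕ} {f : K[X]} {J : ℕ} {u : Fin (J + 1) → K[X] × K[X]}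
    (hu₁ : ∀ j, (u j).1.natDegree ≤ k) (hu₂ : ∀ j, (u j).2.natDegree ≤ k) :
    (stepanovPoly k f u).natDegree ≤ (2 * k + 1) * J + ((k + 1) * f.natDegree + k) := by
  refine natDegree_sum_le_of_forall_le _ _ fun j _ => natDegree_mul_le.trans ?_
  rw [natDegree_X_pow]
  refine add_le_add (Nat.mul_le_mul_left _ (Nat.le_of_lt_succ j.2))
    ((natDegree_add_le _ _).trans (max_le ((hu₁ j).trans (Nat.le_add_left _ _)) ?_))
  refine natDegree_mul_le.trans (add_le_add ?_ (hu₂ j))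
  rw [natDegree_pow]

lemma squarefree_taylor {f : K[X]} (hf : Squarefree f) (c : K) : Squarefree (taylor c f) := by
  intro a ha
  have hdvd := map_dvd (taylorEquiv c).symm ha
  rw [map_mul, show (taylorEquiv c).symm (taylor c f) = f from
    (taylorEquiv c).symm_apply_apply f] at hdvd
  exact (MulEquiv.isUnit_map (taylorEquiv c).symm).1 (hf _ hdvd)

variable [Fintype K]

lemma exists_eq_ringChar_pow_of_card_eq_sq {r : ℕ} (hK : Fintype.card K = r ^ 2) :
    ∃ m, r = ringChar K ^ m := by
  obtain ⟨n, hp, hn⟩ := FiniteField.card K (ringChar K)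
  have hdvd : r ∣ ringChar K ^ (n : ℕ) := by
    rw [← hn, hK]
    exact dvd_pow_self r two_ne_zero
  obtain ⟨m, -, hm⟩ := (Nat.dvd_prime_pow hp).1 hdvd
  exact ⟨m, hm⟩

lemma exists_ringHom_eq_pow {r : ℕ} (hK : Fintype.card K = r ^ 2) (A : Type*) [CommRing A]
    [Nontrivial A] [Algebra K A] : ∃ φ : A →+* A, ∀ a, φ a = a ^ r := by
  obtain ⟨m, rfl⟩ := exists_eq_ringChar_pow_of_card_eq_sq hK
  have : Fact (ringChar K).Prime := ⟨CharP.char_is_prime K (ringChar K)⟩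
  have : CharP A (ringChar K) :=
    charP_of_injective_algebraMap (algebraMap K A).injective (ringChar K)
  exact ⟨iterateFrobenius A (ringChar K) m, fun _ => rfl⟩

lemma ringChar_ne_two_of_odd_card (hK : Odd (Fintype.card K)) : ringChar K ≠ 2 := fun h =>
  Nat.not_even_iff_odd.2 hK (Nat.even_iff.2 (FiniteField.even_card_iff_char_two.1 h))

lemma odd_sq_div_two (k : ℕ) : (2 * k + 1) ^ 2 / 2 = 2 * k * (k + 1) := by
  have h : (2 * k + 1) ^ 2 = 2 * (2 * k * (k + 1)) + 1 := by ring
  omega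

lemma exists_ne_zero_sum_X_pow_mul_eq_zero {r : ℕ} (φ : K[X] →+* K[X]) (hφ : ∀ a, φ a = a ^ r)
    (h : K[X]) {J α β L : ℕ}
    (hα : ∀ j < J, ∀ a ∈ polysOfDegreeLT K α, X ^ j * a ^ r ∈ polysOfDegreeLT K L)
    (hβ : ∀ j < J, ∀ b ∈ polysOfDegreeLT K β, X ^ j * (h * b ^ r) ∈ polysOfDegreeLT K L)
    (hL : L < (α + β) * J) :
    ∃ u : Fin J → K[X] × K[X], u ≠ 0 ∧
      (∀ j, (u j).1 ∈ polysOfDegreeLT K α ∧ (u j).2 ∈ polysOfDegreeLT K β) ∧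
      ∑ j : Fin J, X ^ (j : ℕ) * ((u j).1 ^ r + h * (u j).2 ^ r) = 0 := by
  let dom := Fintype.piFinset fun _ : Fin J => polysOfDegreeLT K α ×ˢ polysOfDegreeLT K β
  let Φ : (Fin J → K[X] × K[X]) → K[X] :=
    fun u => ∑ j : Fin J, X ^ (j : ℕ) * ((u j).1 ^ r + h * (u j).2 ^ r)
  have mem_dom {u : Fin J → K[X] × K[X]} : u ∈ dom ↔
      ∀ j, (u j).1 ∈ polysOfDegreeLT K α ∧ (u j).2 ∈ polysOfDegreeLT K β := by
    simp only [dom, Fintype.mem_piFinset, Finset.mem_product]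
  have hcard : (polysOfDegreeLT K L).card < dom.card := by
    simp only [dom, Fintype.card_piFinset, Finset.card_product, card_polysOfDegreeLT, ← pow_add,
      Finset.prod_const, Finset.card_univ, Fintype.card_fin, ← pow_mul]
    exact Nat.pow_lt_pow_right Fintype.one_lt_card hL
  have hmaps : ∀ u ∈ dom, Φ u ∈ polysOfDegreeLT K L := by
    intro u hu
    simp only [mem_polysOfDegreeLT, ← mem_degreeLT] at hα hβ ⊢
    refine Submodule.sum_mem _ fun j _ => ?_
    have huj := mem_dom.1 hu j
    simp only [mem_polysOfDegreeLT, ← mem_degreeLT] at huj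
    rw [mul_add]
    exact add_mem (hα j j.2 _ huj.1) (hβ j j.2 _ huj.2)
  obtain ⟨u, hu, v, hv, hne, heq⟩ := Finset.exists_ne_map_eq_of_card_lt_of_maps_to hcard hmaps
  refine ⟨u - v, sub_ne_zero.2 hne, fun j => ?_, ?_⟩
  · exact ⟨sub_mem_polysOfDegreeLT (mem_dom.1 hu j).1 (mem_dom.1 hv j).1,
      sub_mem_polysOfDegreeLT (mem_dom.1 hu j).2 (mem_dom.1 hv j).2⟩
  · have hΦ : Φ u - Φ v = 0 := sub_eq_zero.2 heq
    simp only [Φ, ← Finset.sum_sub_distrib] at hΦ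
    rw [← hΦ]
    refine Finset.sum_congr rfl fun j _ => ?_
    simp only [Pi.sub_apply, Prod.fst_sub, Prod.snd_sub, ← hφ, map_sub]
    ring

lemma isRoot_stepanovPoly {k : ℕ} (hK : Fintype.card K = (2 * k + 1) ^ 2) {f : K[X]} {a : K}
    {J : ℕ} {u : Fin J → K[X] × K[X]}
    (hu : ∑ j : Fin J, X ^ (j : ℕ) *
      ((u j).1 ^ (2 * k + 1) + C a * f ^ (k + 1) * (u j).2 ^ (2 * k + 1)) = 0)
    {x : K} (hx : f.eval x ^ (Fintype.card K / 2) = a) : (stepanovPoly k f u).IsRoot x := by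
  obtain ⟨φ, hφ⟩ := exists_ringHom_eq_pow hK K
  refine eq_zero_of_pow_eq_zero (n := 2 * k + 1) ?_
  have hux := congrArg (eval x) hu
  simp only [eval_finsetSum, eval_mul, eval_add, eval_pow, eval_X, eval_C, eval_zero] at hux
  rw [← hux, ← hφ]
  simp only [stepanovPoly, eval_finsetSum, eval_mul, eval_add, eval_pow, eval_X, map_sum, map_mul,
    map_add]
  refine Finset.sum_congr rfl fun j _ => ?_
  have hxj : (x ^ ((2 * k + 1) * (j : ℕ))) ^ (2 * k + 1) = x ^ (j : ℕ) := by
    rw [← pow_mul, show (2 * k + 1) * (j : ℕ) * (2 * k + 1) = (2 * k + 1) ^ 2 * j by ring,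
      pow_mul, ← hK, FiniteField.pow_card]
  have hfx : (f.eval x ^ (k + 1)) ^ (2 * k + 1) = a * f.eval x ^ (k + 1) := by
    rw [← hx, hK, odd_sq_div_two, ← pow_mul, ← pow_add]
    ring_nf
  rw [hφ, hφ, hφ, hφ, hxj, hfx]

lemma exists_stepanov_coefficients {k : ℕ} (hK : Fintype.card K = (2 * k + 1) ^ 2) {f : K[X]}
    (hk : 2 * f.natDegree + 4 ≤ k) (a : K) :
    ∃ u : Fin (k + f.natDegree + 2) → K[X] × K[X], u ≠ 0 ∧
      (∀ j, (u j).1 ∈ polysOfDegreeLT K k ∧ (u j).2 ∈ polysOfDegreeLT K (k - f.natDegree)) ∧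
      ∑ j : Fin (k + f.natDegree + 2), X ^ (j : ℕ) *
        ((u j).1 ^ (2 * k + 1) + C a * f ^ (k + 1) * (u j).2 ^ (2 * k + 1)) = 0 := by
  obtain ⟨φ, hφ⟩ := exists_ringHom_eq_pow hK K[X]
  set D := f.natDegree
  obtain ⟨e, rfl⟩ := Nat.exists_eq_add_of_le hk
  refine exists_ne_zero_sum_X_pow_mul_eq_zero φ hφ _
    (L := 2 * D + 4 + e + D + 2 + (2 * (2 * D + 4 + e) + 1) * (2 * D + 4 + e - 1))
    (fun j hj b hb => ?_) (fun j hj b hb => ?_) ?_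
  · refine mem_polysOfDegreeLT_of_natDegree_lt (natDegree_mul_le.trans_lt ?_)
    rw [natDegree_X_pow, natDegree_pow]
    exact Nat.add_lt_add_of_lt_of_le hj
      (Nat.mul_le_mul_left _ (natDegree_le_of_mem_polysOfDegreeLT hb))
  · refine mem_polysOfDegreeLT_of_natDegree_lt (natDegree_mul_le.trans_lt ?_)
    rw [natDegree_X_pow]
    have hfb : (C a * f ^ (2 * D + 4 + e + 1) * b ^ (2 * (2 * D + 4 + e) + 1)).natDegree ≤
        (2 * D + 4 + e + 1) * D + (2 * (2 * D + 4 + e) + 1) * b.natDegree := by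
      refine natDegree_mul_le.trans (add_le_add ((natDegree_C_mul_le _ _).trans ?_) ?_) <;>
        rw [natDegree_pow]
    have hb' := natDegree_le_of_mem_polysOfDegreeLT hb
    have hbD : b.natDegree + D ≤ 2 * D + 4 + e - 1 := by omega
    have hmul := Nat.mul_le_mul_left (2 * (2 * D + 4 + e) + 1) hbD
    have hD' : (2 * D + 4 + e + 1) * D ≤ (2 * (2 * D + 4 + e) + 1) * D :=
      Nat.mul_le_mul_right _ (by omega)
    rw [mul_add] at hmul
    omega
  · rw [show 2 * D + 4 + e - 1 = 2 * D + 3 + e by omega,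
      show 2 * D + 4 + e - D = D + 4 + e by omega]
    nlinarith [mul_nonneg (Nat.zero_le D) (Nat.zero_le e)]

lemma card_filter_pow_eval_eq_le {k : ℕ} (hK : Fintype.card K = (2 * k + 1) ^ 2) {f : K[X]}
    (hf : Squarefree f) (hD : 1 ≤ f.natDegree) (hf0 : f.coeff 0 ≠ 0)
    (hk : 2 * f.natDegree + 4 ≤ k) (a : K) :
    2 * (Finset.univ.filter fun x : K => f.eval x ^ (Fintype.card K / 2) = a).card ≤
      (2 * k + 1) ^ 2 + 7 * f.natDegree * (2 * k + 1) := by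
  obtain ⟨φ, hφ⟩ := exists_ringHom_eq_pow hK K[X]
  obtain ⟨u, hu0, hu, hsum⟩ := exists_stepanov_coefficients hK hk a
  have hu₁ j := natDegree_le_of_mem_polysOfDegreeLT (hu j).1
  have hu₂ j := natDegree_le_of_mem_polysOfDegreeLT (hu j).2
  have hne : stepanovPoly k f u ≠ 0 :=
    stepanovPoly_ne_zero φ hφ hf hD hf0 hu0 (fun j => by grind) (fun j => by grind)
  have hcard := card_le_degree_of_subset_roots (p := stepanovPoly k f u)
    (Z := Finset.univ.filter fun x : K => f.eval x ^ (Fintype.card K / 2) = a) fun x hx =>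
      (mem_roots hne).2 (isRoot_stepanovPoly hK hsum (Finset.mem_filter.1 hx).2)
  have hdeg := natDegree_stepanovPoly_le (f := f) (fun j => (hu₁ j).trans (Nat.sub_le k 1))
    (fun j => by grind)
  nlinarith [Nat.mul_le_mul_right k hD]

lemma sign_mul_quadraticChar (hK : ringChar K ≠ 2) {ε : ℤ} (hε : ε = 1 ∨ ε = -1) (a : K) :
    ε * quadraticChar K a =
      2 * (if a ^ (Fintype.card K / 2) = (ε : K) then 1 else 0) + (if a = 0 then 1 else 0) - 1 := by
  have hne : (-1 : K) ≠ 1 := Ring.neg_one_ne_one_of_char_ne_two hK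
  rcases eq_or_ne a 0 with rfl | ha
  · have hpos : Fintype.card K / 2 ≠ 0 := by
      have := Fintype.one_lt_card (α := K)
      omega
    rcases hε with rfl | rfl <;> simp [zero_pow hpos]
  · rw [← quadraticChar_eq_pow_of_char_ne_two' hK]
    rcases quadraticChar_dichotomy ha with h | h <;> rcases hε with rfl | rfl <;>
      simp [h, ha, hne, hne.symm]

lemma abs_sum_quadraticChar_le_card {ι : Type*} (s : Finset ι) (v : ι → K) :
    |∑ i ∈ s, quadraticChar K (v i)| ≤ s.card := by
  refine (Finset.abs_sum_le_sum_abs _ _).trans ((Finset.sum_le_card_nsmul s _ 1 fun i _ => ?_).trans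
    (by simp))
  rcases eq_or_ne (v i) 0 with h | h
  · simp [h]
  · rcases quadraticChar_dichotomy h with h | h <;> simp [h]

lemma abs_sum_quadraticChar_eval_le_of_coeff_zero_ne_zero {k : ℕ}
    (hK : Fintype.card K = (2 * k + 1) ^ 2) {f : K[X]} (hf : Squarefree f)
    (hD : 1 ≤ f.natDegree) (hf0 : f.coeff 0 ≠ 0) (hk : 2 * f.natDegree + 4 ≤ k) :
    |∑ x : K, quadraticChar K (f.eval x)| ≤ 14 * f.natDegree * (2 * k + 1) := by
  have h2 : ringChar K ≠ 2 := ringChar_ne_two_of_odd_card (hK ▸ (odd_two_mul_add_one k).pow)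
  have hroots : ((Finset.univ.filter fun x : K => f.eval x = 0).card : ℤ) ≤ f.natDegree := by
    refine Nat.cast_le.2 (card_le_degree_of_subset_roots fun x hx => ?_)
    exact (mem_roots hf.ne_zero).2 (Finset.mem_filter.1 hx).2
  have hDr : f.natDegree ≤ f.natDegree * (2 * k + 1) := Nat.le_mul_of_pos_right _ (by omega)
  have hsign (ε : ℤ) (hε : ε = 1 ∨ ε = -1) :
      ε * ∑ x : K, quadraticChar K (f.eval x) ≤ 14 * f.natDegree * (2 * k + 1) := by
    rw [Finset.mul_sum, Finset.sum_congr rfl fun x _ => sign_mul_quadraticChar h2 hε (f.eval x)]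
    rw [Finset.sum_sub_distrib, Finset.sum_add_distrib, ← Finset.mul_sum, Finset.sum_boole,
      Finset.sum_boole, Finset.sum_const, Finset.card_univ, hK]
    have hN := card_filter_pow_eval_eq_le hK hf hD hf0 hk (ε : K)
    rw [hK] at hN
    zify at hN hDr
    simp only [nsmul_eq_mul, mul_one, Nat.cast_pow, Nat.cast_add, Nat.cast_mul, Nat.cast_ofNat,
      Nat.cast_one]
    linarith
  have hpos := hsign 1 (Or.inl rfl)
  have hneg := hsign (-1) (Or.inr rfl)
  exact abs_le.2 ⟨by linarith, by linarith⟩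

lemma exists_eval_ne_zero_of_natDegree_lt_card {f : K[X]} (hf : f ≠ 0)
    (hcard : f.natDegree < Fintype.card K) : ∃ c : K, f.eval c ≠ 0 := by
  by_contra! h
  refine hcard.not_ge ?_
  rw [← Finset.card_univ]
  exact card_le_degree_of_subset_roots fun x _ => (mem_roots hf).2 (h x)

/- Both the small-field case and the translation making `f(0) ≠ 0` are absorbed by the constant. -/
theorem abs_sum_quadraticChar_eval_le {r : ℕ} (hr : Odd r) (hK : Fintype.card K = r ^ 2)
    {f : K[X]} (hf : Squarefree f) (hD : 1 ≤ f.natDegree) :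
    |∑ x : K, quadraticChar K (f.eval x)| ≤ 14 * f.natDegree * r := by
  obtain ⟨k, rfl⟩ := hr
  by_cases hk : 2 * f.natDegree + 4 ≤ k
  · obtain ⟨c, hc⟩ := exists_eval_ne_zero_of_natDegree_lt_card (K := K) hf.ne_zero
      (by rw [hK]; nlinarith)
    have h := abs_sum_quadraticChar_eval_le_of_coeff_zero_ne_zero hK (squarefree_taylor hf c)
      (by rwa [natDegree_taylor]) (by rwa [taylor_coeff_zero]) (by rwa [natDegree_taylor])
    simp only [taylor_eval, natDegree_taylor] at h
    have htranslate :
        ∑ x : K, quadraticChar K (f.eval (x + c)) = ∑ x : K, quadraticChar K (f.eval x) :=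
      Equiv.sum_comp (Equiv.addRight c) fun x => quadraticChar K (f.eval x)
    exact_mod_cast htranslate ▸ h
  · refine (abs_sum_quadraticChar_le_card _ _).trans ?_
    rw [Finset.card_univ, hK, sq]
    exact_mod_cast Nat.mul_le_mul_right _ (by omega)

end Stepanov

section FrobeniusFixedPoints

variable {K : Type*} [Field K] [Fintype K] {r : ℕ}

lemma X_pow_sub_X_dvd_X_pow_card_sub_X (hK : Fintype.card K = r ^ 2) :
    (X ^ r - X : K[X]) ∣ X ^ Fintype.card K - X := by
  obtain ⟨φ, hφ⟩ := exists_ringHom_eq_pow hK K[X]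
  have hr : r ≠ 0 := by
    rintro rfl
    exact Fintype.card_ne_zero hK
  have hsplit : (X ^ Fintype.card K - X : K[X]) = (X ^ r - X) ^ r + (X ^ r - X) := by
    rw [← hφ, map_sub, hφ, hφ, hK, ← pow_mul, ← sq, sub_add_sub_cancel]
  rw [hsplit]
  exact dvd_add (dvd_pow_self _ hr) dvd_rfl

lemma card_filter_pow_eq_self (hK : Fintype.card K = r ^ 2) :
    (Finset.univ.filter fun x : K => x ^ r = x).card = r := by
  have hr : 1 < r := by
    have := hK ▸ Fintype.one_lt_card (α := K)
    by_contra! h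
    interval_cases r <;> omega
  have hne : (X ^ r - X : K[X]) ≠ 0 := FiniteField.X_pow_card_sub_X_ne_zero K hr
  have hdvd := X_pow_sub_X_dvd_X_pow_card_sub_X hK
  have hcard := FiniteField.X_pow_card_sub_X_ne_zero K (Fintype.one_lt_card (α := K))
  have hsplits : (X ^ r - X : K[X]).Splits :=
    Splits.of_dvd (by simpa using (FiniteField.isSplittingField_sub K K).splits) hcard hdvd
  have hnodup : (X ^ r - X : K[X]).roots.Nodup :=
    Multiset.nodup_of_le (roots.le_of_dvd hcard hdvd)
      (FiniteField.roots_X_pow_card_sub_X K ▸ Finset.univ.nodup)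
  have hroots :
      (Finset.univ.filter fun x : K => x ^ r = x) = (X ^ r - X : K[X]).roots.toFinset := by
    ext x
    simp [mem_roots hne, sub_eq_zero]
  rw [hroots, Multiset.toFinset_card_of_nodup hnodup, ← hsplits.natDegree_eq_card_roots,
    FiniteField.X_pow_card_sub_X_natDegree_eq K hr]

lemma quadraticChar_eq_one_of_pow_eq_self (hr : Odd r) (hK : Fintype.card K = r ^ 2) {z : K}
    (hz : z ^ r = z) (hz0 : z ≠ 0) : quadraticChar K z = 1 := by
  rw [quadraticChar_one_iff_isSquare hz0,
    FiniteField.isSquare_iff (ringChar_ne_two_of_odd_card (hK ▸ hr.pow)) hz0, hK]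
  obtain ⟨k, rfl⟩ := hr
  have hz1 : z ^ (2 * k) = 1 := by
    rw [pow_succ] at hz
    exact mul_right_cancel₀ hz0 (by rw [hz, one_mul])
  rw [odd_sq_div_two, pow_mul, hz1, one_pow]

end FrobeniusFixedPoints

section QuadraticCharacterOfPolynomialValues

lemma isSquare_of_isSquare_algebraMap_of_odd_finrank {E L : Type*} [Field E] [Field L]
    [Algebra E L] (hodd : Odd (Module.finrank E L)) {a : E} (ha : IsSquare (algebraMap E L a)) :
    IsSquare a := by
  have : FiniteDimensional E L := Module.finite_of_finrank_pos hodd.pos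
  obtain ⟨b, hb⟩ := ha
  have hroot : aeval b (X ^ 2 - C a) = 0 := by simp [hb, sq]
  have hb_int : IsIntegral E b := Algebra.IsIntegral.isIntegral b
  have hle : (minpoly E b).natDegree ≤ 2 := by
    have h := natDegree_le_of_dvd (minpoly.dvd E b hroot) (X_pow_sub_C_ne_zero two_pos a)
    rwa [natDegree_X_pow_sub_C] at h
  have hne : (minpoly E b).natDegree ≠ 2 := fun h =>
    Nat.not_even_iff_odd.2 hodd (even_iff_two_dvd.2 (h ▸ minpoly.degree_dvd hb_int))
  have hone : (minpoly E b).natDegree = 1 := by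
    have := minpoly.natDegree_pos hb_int
    omega
  obtain ⟨c, rfl⟩ := minpoly.natDegree_eq_one_iff.1 hone
  exact ⟨c, (algebraMap E L).injective (by rw [hb, map_mul])⟩

variable {F K : Type*} [Field F] [Field K] [Algebra F K]

lemma exists_aeval_eq_of_mem_adjoin_simple {x : K} (hx : IsAlgebraic F x)
    (y : IntermediateField.adjoin F {x}) : ∃ u : F[X], aeval x u = y := by
  have hy : (y : K) ∈ (IntermediateField.adjoin F {x}).toSubalgebra := y.2
  rwa [IntermediateField.adjoin_simple_toSubalgebra_of_isAlgebraic hx,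
    Algebra.adjoin_singleton_eq_range_aeval] at hy

variable [Fintype F]

lemma aeval_pow_card_pow (x : K) (f : F[X]) (m : ℕ) :
    aeval x f ^ Fintype.card F ^ m = aeval (x ^ Fintype.card F ^ m) f := by
  have hpow (y : K) : (FiniteField.frobeniusAlgHom F K ^ m) y = y ^ Fintype.card F ^ m := by
    rw [AlgHom.coe_pow, FiniteField.coe_frobeniusAlgHom, pow_iterate]
  rw [← hpow, ← hpow, aeval_algHom_apply]

lemma sub_modByMonic_mem_monicsOfDegree {P f : F[X]} {e : ℕ} (hP : P.Monic)
    (hPe : P.natDegree ≤ e) (hf : f ∈ monicsOfDegree F e) (w : F[X]) :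
    f - w %ₘ P ∈ monicsOfDegree F e := by
  obtain ⟨hmonic, rfl⟩ := mem_monicsOfDegree.1 hf
  have hlt : (w %ₘ P).degree < f.degree :=
    (degree_modByMonic_lt w hP).trans_le (by
      rw [degree_eq_natDegree hP.ne_zero, degree_eq_natDegree hmonic.ne_zero]
      exact_mod_cast hPe)
  exact mem_monicsOfDegree.2 ⟨hmonic.sub_of_left hlt,
    natDegree_eq_of_degree_eq (degree_sub_eq_left_of_degree_lt hlt)⟩

/- Modulo the minimal polynomial of `x`, multiplication by `u` permutes the monic polynomials of
degree `e`, so the sum equals `χ (u x)` times itself. -/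
lemma sum_monicsOfDegree_mulChar_aeval_eq_zero {R : Type*} [CommRing R] [IsDomain R]
    (χ : MulChar K R) {x : K} (hx : IsIntegral F x) {u : F[X]} (hu : aeval x u ≠ 0)
    (hχu : χ (aeval x u) ≠ 1) {e : ℕ} (he : (minpoly F x).natDegree ≤ e) :
    ∑ f ∈ monicsOfDegree F e, χ (aeval x f) = 0 := by
  have hP : (minpoly F x).Monic := minpoly.monic hx
  set T : F[X] → F[X] := fun f => f - (f - u * f) %ₘ minpoly F x with hT
  have aeval_T (f : F[X]) : aeval x (T f) = aeval x u * aeval x f := by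
    simp only [hT, map_sub, map_mul, aeval_modByMonic_eq_self_of_root (minpoly.aeval F x)]
    ring
  have hmaps : ∀ f ∈ monicsOfDegree F e, T f ∈ monicsOfDegree F e := fun f hf =>
    sub_modByMonic_mem_monicsOfDegree hP he hf _
  have hinj : Set.InjOn T (monicsOfDegree F e) := by
    intro f _ f' _ h
    have heval : aeval x f = aeval x f' := by
      have := congrArg (aeval x) h
      rw [aeval_T, aeval_T] at this
      exact mul_left_cancel₀ hu this
    have hmod : (f - u * f) %ₘ minpoly F x = (f' - u * f') %ₘ minpoly F x := by
      rw [← sub_eq_zero, ← sub_modByMonic, modByMonic_eq_zero_iff_dvd hP]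
      exact minpoly.dvd F x (by simp [heval])
    simpa only [hT, hmod, sub_left_inj] using h
  have hsum : ∑ f ∈ monicsOfDegree F e, χ (aeval x (T f)) =
      ∑ f ∈ monicsOfDegree F e, χ (aeval x f) :=
    Finset.sum_nbij T hmaps hinj (Finset.surjOn_of_injOn_of_card_le T hmaps hinj le_rfl)
      fun _ _ => rfl
  simp only [aeval_T, map_mul, ← Finset.mul_sum] at hsum
  exact (mul_left_eq_self₀.1 hsum).resolve_left hχu

variable [Fintype K] {m : ℕ}

lemma quadraticChar_aeval_eq_one (hF : Odd (Fintype.card F))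
    (hK : Fintype.card K = (Fintype.card F ^ m) ^ 2) {x : K} (hx : x ^ Fintype.card F ^ m = x)
    {f : F[X]} (hf : aeval x f ≠ 0) : quadraticChar K (aeval x f) = 1 :=
  quadraticChar_eq_one_of_pow_eq_self hF.pow hK (by rw [aeval_pow_card_pow, hx]) hf

lemma quadraticChar_algebraMap_eq_one (hF : Odd (Fintype.card F))
    (hK : Fintype.card K = (Fintype.card F ^ m) ^ 2) {c : F} (hc : c ≠ 0) :
    quadraticChar K (algebraMap F K c) = 1 :=
  quadraticChar_eq_one_of_pow_eq_self hF.pow hK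
    (by rw [← map_pow, FiniteField.pow_card_pow]) (by simpa using hc)

lemma finrank_eq_two_mul (hK : Fintype.card K = (Fintype.card F ^ m) ^ 2) :
    Module.finrank F K = 2 * m := by
  have h := Module.card_eq_pow_finrank (K := F) (V := K)
  rw [hK, ← pow_mul] at h
  rw [← Nat.pow_right_injective Fintype.one_lt_card h, mul_comm]

lemma pow_card_pow_eq_self_of_even_finrank_adjoin
    (hK : Fintype.card K = (Fintype.card F ^ m) ^ 2) {x : K}
    (heven : Even (Module.finrank (IntermediateField.adjoin F {x}) K)) :
    x ^ Fintype.card F ^ m = x := by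
  obtain ⟨j, hj⟩ := heven
  have hm : m = Module.finrank F (IntermediateField.adjoin F {x}) * j := by
    have h := Module.finrank_mul_finrank F (IntermediateField.adjoin F {x}) K
    rw [finrank_eq_two_mul hK, hj, ← two_mul, mul_left_comm] at h
    omega
  have hx := FiniteField.pow_card_pow j
    (⟨x, IntermediateField.mem_adjoin_simple_self F x⟩ : IntermediateField.adjoin F {x})
  rw [Module.card_eq_pow_finrank (K := F), ← pow_mul, ← hm] at hx
  exact congrArg Subtype.val hx

/- If `K` had even degree over `F(x)`, then `x` would lie in the subfield of index two; in odd
degree the nonsquares of `F(x)` remain nonsquares in `K`. -/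
lemma exists_quadraticChar_aeval_eq_neg_one (hF : Odd (Fintype.card F))
    (hK : Fintype.card K = (Fintype.card F ^ m) ^ 2) {x : K} (hx : x ^ Fintype.card F ^ m ≠ x) :
    ∃ u : F[X], quadraticChar K (aeval x u) = -1 := by
  have hodd : Odd (Module.finrank (IntermediateField.adjoin F {x}) K) :=
    Nat.not_even_iff_odd.1 fun h => hx (pow_card_pow_eq_self_of_even_finrank_adjoin hK h)
  have hcard : Odd (Fintype.card (IntermediateField.adjoin F {x})) := by
    rw [Module.card_eq_pow_finrank (K := F)]
    exact hF.pow
  obtain ⟨y, hy⟩ := FiniteField.exists_nonsquare (ringChar_ne_two_of_odd_card hcard)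
  obtain ⟨u, hu⟩ := exists_aeval_eq_of_mem_adjoin_simple (Algebra.IsAlgebraic.isAlgebraic x) y
  refine ⟨u, quadraticChar_neg_one_iff_not_isSquare.2 fun hsq => hy ?_⟩
  exact isSquare_of_isSquare_algebraMap_of_odd_finrank hodd
    (show IsSquare (y : K) from hu ▸ hsq)

lemma abs_sum_quadraticChar_aeval_le (hF : Odd (Fintype.card F))
    (hK : Fintype.card K = (Fintype.card F ^ m) ^ 2) {f : F[X]} (hf : Squarefree f)
    (hD : 1 ≤ f.natDegree) :
    |∑ x : K, quadraticChar K (aeval x f)| ≤ 14 * f.natDegree * (Fintype.card F : ℤ) ^ m := by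
  have hsep : (f.map (algebraMap F K)).Separable :=
    (PerfectField.separable_iff_squarefree.2 hf).map
  have h := abs_sum_quadraticChar_eval_le hF.pow hK hsep.squarefree (by rwa [natDegree_map])
  simpa only [natDegree_map, eval_map_algebraMap, Nat.cast_pow] using h

lemma sum_monicsOfDegree_quadraticChar_aeval_eq_zero (hF : Odd (Fintype.card F))
    (hK : Fintype.card K = (Fintype.card F ^ m) ^ 2) {x : K} (hx : x ^ Fintype.card F ^ m ≠ x)
    {e : ℕ} (he : 2 * m ≤ e) :
    ∑ f ∈ monicsOfDegree F e, quadraticChar K (aeval x f) = 0 := by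
  obtain ⟨u, hu⟩ := exists_quadraticChar_aeval_eq_neg_one hF hK hx
  refine sum_monicsOfDegree_mulChar_aeval_eq_zero (quadraticChar K)
    (Algebra.IsIntegral.isIntegral x) (u := u) ?_ (by simp [hu])
    ((minpoly.natDegree_le x).trans (finrank_eq_two_mul hK ▸ he))
  intro h0
  simp [h0] at hu

end QuadraticCharacterOfPolynomialValues

section MonicDivisors

variable {F : Type*} [Field F] [Fintype F]

lemma sum_monicsOfDegree_filter_dvd {A : Type*} [AddCommMonoid A] (φ : F[X] → A) {m : F[X]}
    (hm : m.Monic) {d : ℕ} (hd : m.natDegree ≤ d) :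
    ∑ f ∈ (monicsOfDegree F d).filter (m ∣ ·), φ f =
      ∑ c ∈ monicsOfDegree F (d - m.natDegree), φ (m * c) := by
  symm
  refine Finset.sum_nbij (m * ·) (fun c hc => ?_) (mul_right_injective₀ hm.ne_zero).injOn
    (fun f hf => ?_) fun _ _ => rfl
  · rw [mem_monicsOfDegree] at hc
    rw [Finset.mem_filter, mem_monicsOfDegree, hm.natDegree_mul hc.1, hc.2]
    exact ⟨⟨hm.mul hc.1, Nat.add_sub_cancel' hd⟩, dvd_mul_right _ _⟩
  · simp only [Finset.coe_filter, mem_monicsOfDegree, Set.mem_ofPred_eq] at hf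
    obtain ⟨⟨hmonic, hdeg⟩, c, rfl⟩ := hf
    have hc : c.Monic := hm.of_mul_monic_left hmonic
    rw [hm.natDegree_mul hc] at hdeg
    exact ⟨c, mem_monicsOfDegree.2 ⟨hc, by omega⟩, rfl⟩

lemma filter_dvd_monicsOfDegree_eq_empty {m : F[X]} {d : ℕ} (hd : d < m.natDegree) :
    (monicsOfDegree F d).filter (m ∣ ·) = ∅ := by
  refine Finset.filter_eq_empty_iff.2 fun f hf hdvd => ?_
  obtain ⟨hmonic, rfl⟩ := mem_monicsOfDegree.1 hf
  exact hd.not_ge (natDegree_le_of_dvd hdvd hmonic.ne_zero)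

/-- The finite set of monic polynomials of degree at most `d` over a finite field. -/
noncomputable def monicsOfDegreeLE (F : Type*) [Field F] [Fintype F] (d : ℕ) : Finset F[X] :=
  (Finset.range (d + 1)).biUnion (monicsOfDegree F)

lemma mem_monicsOfDegreeLE {d : ℕ} {f : F[X]} :
    f ∈ monicsOfDegreeLE F d ↔ f.Monic ∧ f.natDegree ≤ d := by
  simp [monicsOfDegreeLE, mem_monicsOfDegree, and_comm]

lemma pairwiseDisjoint_monicsOfDegree (s : Set ℕ) : s.PairwiseDisjoint (monicsOfDegree F) :=
  fun _ _ _ _ hab => Finset.disjoint_left.2 fun _ ha hb =>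
    hab ((mem_monicsOfDegree.1 ha).2.symm.trans (mem_monicsOfDegree.1 hb).2)

lemma sum_monicsOfDegreeLE {A : Type*} [AddCommMonoid A] (φ : F[X] → A) (d : ℕ) :
    ∑ f ∈ monicsOfDegreeLE F d, φ f =
      ∑ j ∈ Finset.range (d + 1), ∑ f ∈ monicsOfDegree F j, φ f :=
  Finset.sum_biUnion (pairwiseDisjoint_monicsOfDegree _)

lemma sum_monicsOfDegree_inv_pow_natDegree (d : ℕ) :
    ∑ f ∈ monicsOfDegree F d, (Fintype.card F : ℝ)⁻¹ ^ f.natDegree = 1 := by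
  have hq : (Fintype.card F : ℝ) ≠ 0 := Nat.cast_ne_zero.2 Fintype.card_ne_zero
  rw [Finset.sum_congr rfl fun f hf => by rw [(mem_monicsOfDegree.1 hf).2], Finset.sum_const,
    card_monicsOfDegree, nsmul_eq_mul, Nat.cast_pow, ← mul_pow, mul_inv_cancel₀ hq, one_pow]

lemma sum_monicsOfDegreeLE_inv_pow_natDegree (d : ℕ) :
    ∑ f ∈ monicsOfDegreeLE F d, (Fintype.card F : ℝ)⁻¹ ^ f.natDegree = d + 1 := by
  rw [sum_monicsOfDegreeLE,
    Finset.sum_congr rfl fun j _ => sum_monicsOfDegree_inv_pow_natDegree j]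
  simp

/-- The finite set of monic divisors of a nonzero polynomial over a finite field; its cardinality
is the divisor function `τ`. -/
noncomputable def monicDivisors (f : F[X]) : Finset F[X] :=
  (monicsOfDegreeLE F f.natDegree).filter (· ∣ f)

lemma mem_monicDivisors {f k : F[X]} (hf : f ≠ 0) :
    k ∈ monicDivisors f ↔ k.Monic ∧ k ∣ f := by
  simp only [monicDivisors, Finset.mem_filter, mem_monicsOfDegreeLE, and_assoc]
  exact and_congr_right fun _ => and_iff_right_of_imp fun h => natDegree_le_of_dvd h hf

lemma card_monicDivisors_mul_le {a b : F[X]} (ha : a ≠ 0) (hb : b ≠ 0) :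
    (monicDivisors (a * b)).card ≤ (monicDivisors a).card * (monicDivisors b).card := by
  rw [← Finset.card_product]
  refine Finset.card_le_card_of_surjOn (fun p => p.1 * p.2) fun k hk => ?_
  obtain ⟨hmonic, hdvd⟩ := (mem_monicDivisors (mul_ne_zero ha hb)).1 hk
  obtain ⟨k₁, k₂, h₁, h₂, rfl⟩ := exists_dvd_and_dvd_of_dvd_mul hdvd
  have h₁0 : k₁ ≠ 0 := left_ne_zero_of_mul hmonic.ne_zero
  have h₂0 : k₂ ≠ 0 := right_ne_zero_of_mul hmonic.ne_zero
  refine ⟨(normalize k₁, normalize k₂), ?_, ?_⟩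
  · simp only [Finset.coe_product, Set.mem_prod, Finset.mem_coe, mem_monicDivisors ha,
      mem_monicDivisors hb, normalize_dvd_iff]
    exact ⟨⟨monic_normalize h₁0, h₁⟩, monic_normalize h₂0, h₂⟩
  · exact eq_of_monic_of_associated ((monic_normalize h₁0).mul (monic_normalize h₂0)) hmonic
      ((normalize_associated k₁).mul_mul (normalize_associated k₂))

lemma sum_monicsOfDegree_card_monicDivisors (d : ℕ) :
    ∑ f ∈ monicsOfDegree F d, (monicDivisors f).card = (d + 1) * Fintype.card F ^ d := by
  have hmultiples (k : F[X]) (hk : k.Monic) (hkd : k.natDegree ≤ d) :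
      ∑ f ∈ monicsOfDegree F d, (if k ∣ f then 1 else 0) =
        Fintype.card F ^ (d - k.natDegree) := by
    rw [← Finset.sum_filter, sum_monicsOfDegree_filter_dvd (fun _ => 1) hk hkd, Finset.sum_const,
      card_monicsOfDegree, smul_eq_mul, mul_one]
  calc ∑ f ∈ monicsOfDegree F d, (monicDivisors f).card
      = ∑ f ∈ monicsOfDegree F d, ∑ k ∈ monicsOfDegreeLE F d, (if k ∣ f then 1 else 0) :=
        Finset.sum_congr rfl fun f hf => by
          rw [monicDivisors, (mem_monicsOfDegree.1 hf).2, Finset.card_filter]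
    _ = ∑ j ∈ Finset.range (d + 1), ∑ k ∈ monicsOfDegree F j,
          ∑ f ∈ monicsOfDegree F d, (if k ∣ f then 1 else 0) := by
        rw [Finset.sum_comm, sum_monicsOfDegreeLE]
    _ = ∑ _j ∈ Finset.range (d + 1), Fintype.card F ^ d := by
        refine Finset.sum_congr rfl fun j hj => ?_
        have hjd : j ≤ d := Nat.lt_succ_iff.1 (Finset.mem_range.1 hj)
        rw [Finset.sum_congr rfl fun k hk => by
          obtain ⟨hmonic, hdeg⟩ := mem_monicsOfDegree.1 hk
          rw [hmultiples k hmonic (hdeg ▸ hjd), hdeg],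
          Finset.sum_const, card_monicsOfDegree, smul_eq_mul, ← pow_add, Nat.add_sub_cancel' hjd]
    _ = (d + 1) * Fintype.card F ^ d := by simp

end MonicDivisors

section SquarefreeSieve

variable {F : Type*} [Field F]

lemma eq_of_monic_of_irreducible_of_dvd {Q R : F[X]} (hQ : Q.Monic) (hR : R.Monic)
    (hQi : Irreducible Q) (hRi : Irreducible R) (h : Q ∣ R) : Q = R :=
  eq_of_monic_of_associated hQ hR (hQi.associated_of_dvd hRi h)

/-- The least power of a prime `Q` that cannot divide a squarefree polynomial coprime to `h`. -/
noncomputable def localObstruction (h Q : F[X]) : F[X] := if Q ∣ h then Q else Q ^ 2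

lemma localObstruction_monic (h : F[X]) {Q : F[X]} (hQ : Q.Monic) :
    (localObstruction h Q).Monic := by
  unfold localObstruction
  split_ifs
  exacts [hQ, hQ.pow 2]

lemma isCoprime_localObstruction (h : F[X]) {Q R : F[X]} (hQR : IsCoprime Q R) :
    IsCoprime (localObstruction h Q) (localObstruction h R) := by
  unfold localObstruction
  split_ifs
  exacts [hQR, hQR.pow_right, hQR.pow_left, hQR.pow]

lemma prod_localObstruction (h : F[X]) (S : Finset F[X]) :
    ∏ Q ∈ S, localObstruction h Q =
      (∏ Q ∈ S.filter (· ∣ h), Q) * (∏ Q ∈ S.filter (¬ · ∣ h), Q) ^ 2 := by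
  rw [← Finset.prod_filter_mul_prod_filter_not S (· ∣ h), ← Finset.prod_pow]
  congr 1 <;> refine Finset.prod_congr rfl fun Q hQ => ?_
  · exact if_pos (Finset.mem_filter.1 hQ).2
  · exact if_neg (Finset.mem_filter.1 hQ).2

lemma natDegree_prod_localObstruction (h : F[X]) {S : Finset F[X]} (hS : ∀ Q ∈ S, Q.Monic) :
    (∏ Q ∈ S, localObstruction h Q).natDegree =
      (∏ Q ∈ S.filter (· ∣ h), Q).natDegree + 2 * (∏ Q ∈ S.filter (¬ · ∣ h), Q).natDegree := by
  have hmonic (p : F[X] → Prop) [DecidablePred p] : (∏ Q ∈ S.filter p, Q).Monic :=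
    monic_prod_of_monic _ _ fun Q hQ => hS Q (Finset.mem_of_mem_filter Q hQ)
  rw [prod_localObstruction, (hmonic _).natDegree_mul ((hmonic _).pow 2), (hmonic _).natDegree_pow]

variable [Fintype F]

/-- The finite set of monic irreducible polynomials of degree at most `d` over a finite field. -/
noncomputable def monicPrimesOfDegreeLE (F : Type*) [Field F] [Fintype F] (d : ℕ) : Finset F[X] :=
  (monicsOfDegreeLE F d).filter Irreducible

lemma mem_monicPrimesOfDegreeLE {d : ℕ} {f : F[X]} :
    f ∈ monicPrimesOfDegreeLE F d ↔ f.Monic ∧ Irreducible f ∧ f.natDegree ≤ d := by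
  simp only [monicPrimesOfDegreeLE, Finset.mem_filter, mem_monicsOfDegreeLE]
  tauto

lemma isCoprime_of_mem_monicPrimesOfDegreeLE {d : ℕ} {Q R : F[X]}
    (hQ : Q ∈ monicPrimesOfDegreeLE F d) (hR : R ∈ monicPrimesOfDegreeLE F d) (hne : Q ≠ R) :
    IsCoprime Q R := by
  obtain ⟨hQm, hQi, -⟩ := mem_monicPrimesOfDegreeLE.1 hQ
  obtain ⟨hRm, hRi, -⟩ := mem_monicPrimesOfDegreeLE.1 hR
  exact hQi.coprime_iff_not_dvd.2 fun h =>
    hne (eq_of_monic_of_irreducible_of_dvd hQm hRm hQi hRi h)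

lemma prod_monic_of_subset_monicPrimesOfDegreeLE {d : ℕ} {S : Finset F[X]}
    (hS : S ⊆ monicPrimesOfDegreeLE F d) : (∏ Q ∈ S, Q).Monic :=
  monic_prod_of_monic _ _ fun _ hQ => (mem_monicPrimesOfDegreeLE.1 (hS hQ)).1

lemma prod_dvd_of_subset_monicPrimesOfDegreeLE {d : ℕ} {S : Finset F[X]}
    (hS : S ⊆ monicPrimesOfDegreeLE F d) {f : F[X]} (hf : ∀ Q ∈ S, Q ∣ f) : ∏ Q ∈ S, Q ∣ f :=
  Finset.prod_dvd_of_coprime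
    (fun _ hQ _ hR hne => isCoprime_of_mem_monicPrimesOfDegreeLE (hS hQ) (hS hR) hne) hf

lemma subset_of_prod_dvd_prod {d : ℕ} {S T : Finset F[X]} (hS : S ⊆ monicPrimesOfDegreeLE F d)
    (hT : T ⊆ monicPrimesOfDegreeLE F d) (h : ∏ Q ∈ S, Q ∣ ∏ Q ∈ T, Q) : S ⊆ T := by
  intro Q hQ
  obtain ⟨hQm, hQi, -⟩ := mem_monicPrimesOfDegreeLE.1 (hS hQ)
  obtain ⟨R, hR, hdvd⟩ :=
    (hQi.prime.dvd_finsetProd_iff _).1 ((Finset.dvd_prod_of_mem _ hQ).trans h)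
  obtain ⟨hRm, hRi, -⟩ := mem_monicPrimesOfDegreeLE.1 (hT hR)
  rwa [eq_of_monic_of_irreducible_of_dvd hQm hRm hQi hRi hdvd]

lemma exists_mem_monicPrimesOfDegreeLE_associated {f z : F[X]} (hf : f ≠ 0) (hz : Irreducible z)
    (hdvd : z ∣ f) : ∃ Q ∈ monicPrimesOfDegreeLE F f.natDegree, Associated Q z := by
  have hassoc := normalize_associated z
  exact ⟨normalize z, mem_monicPrimesOfDegreeLE.2 ⟨monic_normalize hz.ne_zero,
    hassoc.symm.irreducible hz, natDegree_le_of_dvd (hassoc.dvd.trans hdvd) hf⟩, hassoc⟩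

lemma squarefree_and_isCoprime_iff {f : F[X]} (hf : f ≠ 0) (h : F[X]) :
    Squarefree f ∧ IsCoprime f h ↔
      ∀ Q ∈ monicPrimesOfDegreeLE F f.natDegree, ¬ localObstruction h Q ∣ f := by
  constructor
  · rintro ⟨hsq, hcop⟩ Q hQ hdvd
    have hQi := (mem_monicPrimesOfDegreeLE.1 hQ).2.1
    unfold localObstruction at hdvd
    split_ifs at hdvd with hQh
    · exact hQi.not_isUnit (hcop.isUnit_of_dvd' hdvd hQh)
    · exact hQi.not_isUnit (hsq Q (sq Q ▸ hdvd))
  · intro H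
    have no_obstruction (z : F[X]) (hz : Irreducible z) (hzf : z ∣ f) (hbad : z ∣ h ∨ z * z ∣ f) :
        False := by
      obtain ⟨Q, hQ, hassoc⟩ := exists_mem_monicPrimesOfDegreeLE_associated hf hz hzf
      refine H Q hQ ?_
      unfold localObstruction
      split_ifs with hQh
      · exact hassoc.dvd.trans hzf
      · rw [sq]
        exact (mul_dvd_mul hassoc.dvd hassoc.dvd).trans
          (hbad.resolve_left fun hzh => hQh (hassoc.dvd.trans hzh))
    exact ⟨(squarefree_iff_irreducible_sq_not_dvd_of_ne_zero hf).2 fun z hz hzz =>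
        no_obstruction z hz ((dvd_mul_right z z).trans hzz) (Or.inr hzz),
      isCoprime_of_irreducible_dvd (fun h0 => hf h0.1) fun z hz hzf hzh =>
        no_obstruction z hz hzf (Or.inl hzh)⟩

lemma prod_localObstruction_dvd_iff {d : ℕ} {S : Finset F[X]} (hS : S ⊆ monicPrimesOfDegreeLE F d)
    (h f : F[X]) :
    ∏ Q ∈ S, localObstruction h Q ∣ f ↔ ∀ Q ∈ S, localObstruction h Q ∣ f :=
  ⟨fun hdvd _ hQ => (Finset.dvd_prod_of_mem _ hQ).trans hdvd, Finset.prod_dvd_of_coprime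
    fun _ hQ _ hR hne => isCoprime_localObstruction h
      (isCoprime_of_mem_monicPrimesOfDegreeLE (hS hQ) (hS hR) hne)⟩

lemma sum_squarefree_coprime_eq_sum_powerset (ψ : F[X] → ℤ) (d : ℕ) (h : F[X]) :
    ∑ f ∈ (monicsOfDegree F d).filter (fun f => Squarefree f ∧ IsCoprime f h), ψ f =
      ∑ S ∈ (monicPrimesOfDegreeLE F d).powerset, (-1) ^ S.card *
        ∑ f ∈ (monicsOfDegree F d).filter (∏ Q ∈ S, localObstruction h Q ∣ ·), ψ f := by
  have hsieve (f : F[X]) (hf : f ∈ monicsOfDegree F d) :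
      (if Squarefree f ∧ IsCoprime f h then ψ f else 0) =
        ∑ S ∈ (monicPrimesOfDegreeLE F d).powerset, (-1) ^ S.card *
          if ∏ Q ∈ S, localObstruction h Q ∣ f then ψ f else 0 := by
    obtain ⟨hmonic, rfl⟩ := mem_monicsOfDegree.1 hf
    have hprod : (if Squarefree f ∧ IsCoprime f h then (1 : ℤ) else 0) =
        ∏ Q ∈ monicPrimesOfDegreeLE F f.natDegree,
          (1 + -(if localObstruction h Q ∣ f then (1 : ℤ) else 0)) := by
      have hfactor (Q : F[X]) : (1 + -(if localObstruction h Q ∣ f then (1 : ℤ) else 0)) =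
          if ¬ localObstruction h Q ∣ f then 1 else 0 := by
        split_ifs <;> simp
      simp only [hfactor, Finset.prod_ite_zero, Finset.prod_const_one,
        squarefree_and_isCoprime_iff hmonic.ne_zero h]
    rw [← boole_mul, hprod, Finset.prod_one_add, Finset.sum_mul]
    refine Finset.sum_congr rfl fun S hS => ?_
    rw [Finset.prod_neg, Finset.prod_ite_zero, Finset.prod_const_one, mul_assoc, boole_mul]
    simp only [prod_localObstruction_dvd_iff (Finset.mem_powerset.1 hS) h f]
  rw [Finset.sum_filter, Finset.sum_congr rfl hsieve, Finset.sum_comm]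
  simp only [← Finset.mul_sum, Finset.sum_filter]

lemma abs_sum_filter_dvd_le {ψ : F[X] →* ℤ} (hψ : ∀ f, |ψ f| ≤ 1) {n : ℕ}
    (hzero : ∀ e, n ≤ e → ∑ f ∈ monicsOfDegree F e, ψ f = 0) (d : ℕ) {m : F[X]} (hm : m.Monic) :
    |∑ f ∈ (monicsOfDegree F d).filter (m ∣ ·), ψ f| ≤
      if m.natDegree ≤ d ∧ d < m.natDegree + n then (Fintype.card F : ℤ) ^ (d - m.natDegree)
      else 0 := by
  by_cases hmd : m.natDegree ≤ d
  · rw [sum_monicsOfDegree_filter_dvd ψ hm hmd]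
    simp only [map_mul, ← Finset.mul_sum]
    split_ifs with hrange
    · calc |ψ m * ∑ c ∈ monicsOfDegree F (d - m.natDegree), ψ c|
          ≤ |∑ c ∈ monicsOfDegree F (d - m.natDegree), ψ c| := by
            rw [abs_mul]
            exact mul_le_of_le_one_left (abs_nonneg _) (hψ m)
        _ ≤ ∑ c ∈ monicsOfDegree F (d - m.natDegree), 1 :=
            (Finset.abs_sum_le_sum_abs _ _).trans (Finset.sum_le_sum fun c _ => hψ c)
        _ = (Fintype.card F : ℤ) ^ (d - m.natDegree) := by simp [card_monicsOfDegree]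
    · rw [hzero _ (by omega), mul_zero, abs_zero]
  · rw [filter_dvd_monicsOfDegree_eq_empty (not_le.1 hmd)]
    simp [hmd]

lemma injOn_prod_filter_dvd (h : F[X]) (d : ℕ) :
    Set.InjOn (fun S : Finset F[X] => (∏ Q ∈ S.filter (· ∣ h), Q, ∏ Q ∈ S.filter (¬ · ∣ h), Q))
      {S | S ⊆ monicPrimesOfDegreeLE F d} := by
  intro S hS T hT hST
  have hprod : ∏ Q ∈ S, Q = ∏ Q ∈ T, Q := by
    rw [← Finset.prod_filter_mul_prod_filter_not S (· ∣ h),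
      ← Finset.prod_filter_mul_prod_filter_not T (· ∣ h)]
    exact congrArg (fun p => p.1 * p.2) hST
  exact (subset_of_prod_dvd_prod hS hT hprod.dvd).antisymm
    (subset_of_prod_dvd_prod hT hS hprod.symm.dvd)

lemma prod_filter_dvd_mem {h : F[X]} (hh : h ≠ 0) {d : ℕ} {S : Finset F[X]}
    (hS : S ⊆ monicPrimesOfDegreeLE F d) (hdeg : (∏ Q ∈ S, localObstruction h Q).natDegree ≤ d) :
    (∏ Q ∈ S.filter (· ∣ h), Q, ∏ Q ∈ S.filter (¬ · ∣ h), Q) ∈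
      monicDivisors h ×ˢ monicsOfDegreeLE F d := by
  have hsub (p : F[X] → Prop) [DecidablePred p] : S.filter p ⊆ monicPrimesOfDegreeLE F d :=
    (Finset.filter_subset p S).trans hS
  rw [natDegree_prod_localObstruction h fun Q hQ => (mem_monicPrimesOfDegreeLE.1 (hS hQ)).1]
    at hdeg
  rw [Finset.mem_product, mem_monicDivisors hh, mem_monicsOfDegreeLE]
  exact ⟨⟨prod_monic_of_subset_monicPrimesOfDegreeLE (hsub _),
    prod_dvd_of_subset_monicPrimesOfDegreeLE (hsub _) fun Q hQ => (Finset.mem_filter.1 hQ).2⟩,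
    prod_monic_of_subset_monicPrimesOfDegreeLE (hsub _), by dsimp only; omega⟩

/- A set `S` of primes is determined by the product of its members dividing `h`, a divisor of `h`,
and the product of the others, which has degree at most `d`. -/
lemma sum_inv_pow_natDegree_prod_le {h : F[X]} (hh : h ≠ 0) (d : ℕ) :
    ∑ S ∈ (monicPrimesOfDegreeLE F d).powerset.filter
        (fun S => (∏ Q ∈ S, localObstruction h Q).natDegree ≤ d),
      (Fintype.card F : ℝ)⁻¹ ^ (∏ Q ∈ S.filter (¬ · ∣ h), Q).natDegree ≤
      (d + 1) * (monicDivisors h).card := by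
  rw [← Finset.sum_image (f := fun p : F[X] × F[X] => (Fintype.card F : ℝ)⁻¹ ^ p.2.natDegree)
    ((injOn_prod_filter_dvd h d).mono fun S hS => ?mem_primes)]
  case mem_primes => exact Finset.mem_powerset.1 (Finset.mem_of_mem_filter S hS)
  calc _ ≤ ∑ p ∈ monicDivisors h ×ˢ monicsOfDegreeLE F d,
          (Fintype.card F : ℝ)⁻¹ ^ p.2.natDegree := by
        refine Finset.sum_le_sum_of_subset_of_nonneg (Finset.image_subset_iff.2 fun S hS => ?_)
          fun _ _ _ => by positivity
        obtain ⟨hSP, hdeg⟩ := Finset.mem_filter.1 hS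
        exact prod_filter_dvd_mem hh (Finset.mem_powerset.1 hSP) hdeg
    _ = (d + 1) * (monicDivisors h).card := by
        simp only [Finset.sum_product, sum_monicsOfDegreeLE_inv_pow_natDegree, Finset.sum_const,
          nsmul_eq_mul, mul_comm]

theorem abs_sum_squarefree_coprime_le {ψ : F[X] →* ℤ} (hψ : ∀ f, |ψ f| ≤ 1) {n : ℕ}
    (hzero : ∀ e, n ≤ e → ∑ f ∈ monicsOfDegree F e, ψ f = 0) (d : ℕ) {h : F[X]} (hh : h ≠ 0) :
    |((∑ f ∈ (monicsOfDegree F d).filter (fun f => Squarefree f ∧ IsCoprime f h), ψ f : ℤ) : ℝ)| ≤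
      √(Fintype.card F) ^ (d + n) * ((d + 1) * (monicDivisors h).card) := by
  set 𝒮 := (monicPrimesOfDegreeLE F d).powerset
  set obs : Finset F[X] → F[X] := fun S => ∏ Q ∈ S, localObstruction h Q with hobs
  set s : ℝ := √(Fintype.card F)
  have hs2 : (Fintype.card F : ℝ) = s ^ 2 := (Real.sq_sqrt (Nat.cast_nonneg _)).symm
  have hs1 : 1 ≤ s := Real.one_le_sqrt.2 (Nat.one_le_cast.2 Fintype.card_pos)
  have hterm (S : Finset F[X]) (hS : S ∈ 𝒮) :
      ((if (obs S).natDegree ≤ d ∧ d < (obs S).natDegree + n then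
        (Fintype.card F : ℤ) ^ (d - (obs S).natDegree) else 0 : ℤ) : ℝ) ≤
      s ^ (d + n) * if (obs S).natDegree ≤ d then
        (Fintype.card F : ℝ)⁻¹ ^ (∏ Q ∈ S.filter (¬ · ∣ h), Q).natDegree else 0 := by
    have hdeg := natDegree_prod_localObstruction h fun Q hQ =>
      (mem_monicPrimesOfDegreeLE.1 (Finset.mem_powerset.1 hS hQ)).1
    split_ifs with hrange hle hle
    · push_cast
      rw [inv_pow, ← div_eq_mul_inv, le_div_iff₀ (by rw [hs2]; positivity), hs2, ← pow_mul,
        ← pow_mul, ← pow_add]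
      exact pow_le_pow_right₀ hs1 (by simp only [hobs] at *; omega)
    · exact absurd hrange.1 hle
    · push_cast; positivity
    · simp
  calc |((∑ f ∈ (monicsOfDegree F d).filter (fun f => Squarefree f ∧ IsCoprime f h), ψ f : ℤ) : ℝ)|
      ≤ ∑ S ∈ 𝒮, ((if (obs S).natDegree ≤ d ∧ d < (obs S).natDegree + n then
          (Fintype.card F : ℤ) ^ (d - (obs S).natDegree) else 0 : ℤ) : ℝ) := by
        rw [sum_squarefree_coprime_eq_sum_powerset, ← Int.cast_abs, ← Int.cast_sum, Int.cast_le]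
        refine (Finset.abs_sum_le_sum_abs _ _).trans (Finset.sum_le_sum fun S hS => ?_)
        rw [abs_mul, abs_pow, abs_neg, abs_one, one_pow, one_mul]
        exact abs_sum_filter_dvd_le hψ hzero d (monic_prod_of_monic _ _ fun Q hQ =>
          localObstruction_monic h
            (mem_monicPrimesOfDegreeLE.1 (Finset.mem_powerset.1 hS hQ)).1)
    _ ≤ s ^ (d + n) * ((d + 1) * (monicDivisors h).card) := by
        refine (Finset.sum_le_sum hterm).trans ?_
        rw [← Finset.mul_sum, ← Finset.sum_filter]
        exact mul_le_mul_of_nonneg_left (sum_inv_pow_natDegree_prod_le hh d) (by positivity)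

end SquarefreeSieve

section LargePrimeUnionBound

variable {F : Type*} [Field F] [Fintype F]

lemma card_filter_dvd_one_add_mul_le (M : F[X]) {h : F[X]} (hh : h.Monic) (d : ℕ) :
    ((monicsOfDegree F d).filter (h ∣ 1 + M * ·)).card ≤ Fintype.card F ^ (d - h.natDegree) := by
  obtain hempty | ⟨m₀, hm₀⟩ := ((monicsOfDegree F d).filter (h ∣ 1 + M * ·)).eq_empty_or_nonempty
  · simp [hempty]
  obtain ⟨hm₀d, hdvd₀⟩ := Finset.mem_filter.1 hm₀
  rw [mem_monicsOfDegree] at hm₀d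
  have hcop : IsCoprime h M := by
    obtain ⟨c, hc⟩ := hdvd₀
    exact ⟨c, -m₀, by linear_combination -hc⟩
  have hquot : ∀ m ∈ (monicsOfDegree F d).filter (h ∣ 1 + M * ·), ∃ c, m - m₀ = h * c := by
    intro m hm
    refine hcop.dvd_of_dvd_mul_left ?_
    convert dvd_sub (Finset.mem_filter.1 hm).2 hdvd₀ using 1
    ring
  choose! c hc using hquot
  rw [← card_polysOfDegreeLT]
  refine Finset.card_le_card_of_injOn c (fun m hm => ?_) fun a ha b hb hab => ?_
  · obtain ⟨hmonic, hdeg⟩ := mem_monicsOfDegree.1 (Finset.mem_filter.1 hm).1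
    have hlt : (h * c m).degree < d := by
      rw [← hc m hm, ← hdeg, ← degree_eq_natDegree hmonic.ne_zero]
      refine degree_sub_lt_left ?_ hmonic.ne_zero
        (hmonic.leadingCoeff.trans hm₀d.1.leadingCoeff.symm)
      rw [degree_eq_natDegree hmonic.ne_zero, degree_eq_natDegree hm₀d.1.ne_zero, hdeg, hm₀d.2]
    refine mem_polysOfDegreeLT.2 ?_
    obtain hzero | hne := eq_or_ne (c m) 0
    · simp [hzero]
    · rw [degree_eq_natDegree (mul_ne_zero hh.ne_zero hne), hh.natDegree_mul' hne,
        Nat.cast_lt] at hlt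
      rw [degree_eq_natDegree hne, Nat.cast_lt]
      omega
  · exact sub_left_injective ((hc a ha).trans (hab ▸ (hc b hb).symm))

lemma sum_Ioc_half_pow_le (k N : ℕ) : ∑ j ∈ Finset.Ioc k N, (1 / 2 : ℝ) ^ j ≤ (1 / 2) ^ k := by
  have htail (N : ℕ) (hN : k ≤ N) :
      ∑ j ∈ Finset.Ioc k N, (1 / 2 : ℝ) ^ j = (1 / 2) ^ k - (1 / 2) ^ N := by
    induction N, hN using Nat.le_induction with
    | base => simp
    | succ N hN ih => rw [Finset.sum_Ioc_succ_top hN, ih, pow_succ]; ring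
  obtain hN | hN := le_total k N
  · rw [htail N hN]
    linarith [pow_pos (one_half_pos (α := ℝ)) N]
  · rw [Finset.Ioc_eq_empty_of_le hN, Finset.sum_empty]
    positivity

lemma pow_le_pow_mul_half_pow_add_inv {q : ℝ} (hq : 2 ≤ q) {a b j u : ℕ}
    (h : a + j ≤ b ∨ a + u ≤ b) : q ^ a ≤ q ^ b * ((1 / 2) ^ j + (q ^ u)⁻¹) := by
  have hq₁ : 1 ≤ q := one_le_two.trans hq
  have hdrop (i : ℕ) (hi : a + i ≤ b) : q ^ a ≤ q ^ b * (q ^ i)⁻¹ := by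
    rw [← div_eq_mul_inv, le_div_iff₀ (by positivity), ← pow_add]
    exact pow_le_pow_right₀ hq₁ hi
  rw [mul_add]
  obtain hj | hu := h
  · refine (hdrop j hj).trans (le_add_of_le_of_nonneg ?_ (by positivity))
    rw [one_div, inv_pow]
    gcongr
  · exact (hdrop u hu).trans (le_add_of_nonneg_left (by positivity))

lemma sum_monicsOfDegree_card_le {ι : Type*} (E : F[X] → Finset ι) {b j u : ℕ}
    (hcard : ∀ Q ∈ monicsOfDegree F j, ∃ a, (E Q).card ≤ Fintype.card F ^ a ∧
      (a + 2 * j ≤ b ∨ a + j + u ≤ b)) :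
    ∑ Q ∈ monicsOfDegree F j, ((E Q).card : ℝ) ≤
      (Fintype.card F : ℝ) ^ b * ((1 / 2) ^ j + ((Fintype.card F : ℝ) ^ u)⁻¹) := by
  set q : ℝ := (Fintype.card F : ℝ)
  have hq : 2 ≤ q := Nat.ofNat_le_cast.2 Fintype.one_lt_card
  have hterm (Q : F[X]) (hQ : Q ∈ monicsOfDegree F j) :
      q ^ j * ((E Q).card : ℝ) ≤ q ^ b * ((1 / 2) ^ j + (q ^ u)⁻¹) := by
    obtain ⟨a, ha, hab⟩ := hcard Q hQ
    calc q ^ j * ((E Q).card : ℝ) ≤ q ^ j * q ^ a := by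
          gcongr
          exact (Nat.cast_le.2 ha).trans_eq (Nat.cast_pow _ _)
      _ = q ^ (j + a) := (pow_add _ _ _).symm
      _ ≤ _ := pow_le_pow_mul_half_pow_add_inv hq (by omega)
  have hqj : 0 < q ^ j := by positivity
  refine (Finset.sum_le_card_nsmul _ _ _ fun Q hQ => (le_div_iff₀' hqj).2 (hterm Q hQ)).trans ?_
  rw [card_monicsOfDegree, nsmul_eq_mul, Nat.cast_pow, mul_div_cancel₀ _ hqj.ne']

/- The union bound over the events `E Q`. Those of typical size `q ^ (b - 2 deg Q)` contribute a
geometric series; the exceptional ones, where `deg Q` exceeds the available degrees, are controlled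
by the spare exponent `u`. -/
lemma card_le_of_forall_exists_monic {ι : Type*} (S : Finset ι) (E : F[X] → Finset ι)
    {k N b u : ℕ}
    (hcover : ∀ x ∈ S, ∃ Q : F[X], Q.Monic ∧ k < Q.natDegree ∧ Q.natDegree ≤ N ∧ x ∈ E Q)
    (hcard : ∀ Q : F[X], Q.Monic → Q.natDegree ≤ N → ∃ a, (E Q).card ≤ Fintype.card F ^ a ∧
      (a + 2 * Q.natDegree ≤ b ∨ a + Q.natDegree + u ≤ b)) :
    (S.card : ℝ) ≤
      (Fintype.card F : ℝ) ^ b * ((1 / 2) ^ k + N * ((Fintype.card F : ℝ) ^ u)⁻¹) := by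
  set q : ℝ := (Fintype.card F : ℝ)
  have hsub : S ⊆ (Finset.Ioc k N).biUnion fun j => (monicsOfDegree F j).biUnion E := by
    intro x hx
    obtain ⟨Q, hmonic, hk, hN, hxE⟩ := hcover x hx
    exact Finset.mem_biUnion.2 ⟨Q.natDegree, Finset.mem_Ioc.2 ⟨hk, hN⟩,
      Finset.mem_biUnion.2 ⟨Q, mem_monicsOfDegree.2 ⟨hmonic, rfl⟩, hxE⟩⟩
  have hlayer (j : ℕ) (hj : j ∈ Finset.Ioc k N) :
      ∑ Q ∈ monicsOfDegree F j, ((E Q).card : ℝ) ≤ q ^ b * ((1 / 2) ^ j + (q ^ u)⁻¹) := by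
    refine sum_monicsOfDegree_card_le E fun Q hQ => ?_
    obtain ⟨hmonic, rfl⟩ := mem_monicsOfDegree.1 hQ
    exact hcard Q hmonic (Finset.mem_Ioc.1 hj).2
  calc (S.card : ℝ) ≤ ∑ j ∈ Finset.Ioc k N, ∑ Q ∈ monicsOfDegree F j, ((E Q).card : ℝ) := by
        exact_mod_cast (Finset.card_le_card hsub).trans
          (Finset.card_biUnion_le.trans (Finset.sum_le_sum fun j _ => Finset.card_biUnion_le))
    _ ≤ ∑ j ∈ Finset.Ioc k N, q ^ b * ((1 / 2) ^ j + (q ^ u)⁻¹) := Finset.sum_le_sum hlayer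
    _ = q ^ b * (∑ j ∈ Finset.Ioc k N, (1 / 2) ^ j + (N - k : ℕ) * (q ^ u)⁻¹) := by
        rw [← Finset.mul_sum, Finset.sum_add_distrib, Finset.sum_const, Nat.card_Ioc, nsmul_eq_mul]
    _ ≤ q ^ b * ((1 / 2) ^ k + N * (q ^ u)⁻¹) := by
        gcongr
        exacts [sum_Ioc_half_pow_le k N, Nat.sub_le N k]

end LargePrimeUnionBound

section SmallPrimes

variable {F : Type*} [Field F] [Fintype F]

/-- The product of all monic irreducible polynomials of degree at most `5`. Polynomials congruent to
`1` modulo it have no prime factor of degree at most `5`; beyond that degree union bounds over the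
remaining primes are small enough for every finite field. -/
noncomputable def smallPrimesProd (F : Type*) [Field F] [Fintype F] : F[X] :=
  ∏ Q ∈ monicPrimesOfDegreeLE F 5, Q

lemma smallPrimesProd_monic : (smallPrimesProd F).Monic :=
  prod_monic_of_subset_monicPrimesOfDegreeLE subset_rfl

lemma dvd_smallPrimesProd {Q : F[X]} (hQ : Q ∈ monicPrimesOfDegreeLE F 5) :
    Q ∣ smallPrimesProd F :=
  Finset.dvd_prod_of_mem (fun Q : F[X] => Q) hQ

lemma natDegree_smallPrimesProd_pos : 0 < (smallPrimesProd F).natDegree := by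
  have hX : (X : F[X]) ∈ monicPrimesOfDegreeLE F 5 :=
    mem_monicPrimesOfDegreeLE.2 ⟨monic_X, irreducible_X, by simp⟩
  exact (natDegree_X (R := F)).symm.le.trans
    (natDegree_le_of_dvd (dvd_smallPrimesProd hX) smallPrimesProd_monic.ne_zero)

lemma one_add_smallPrimesProd_mul_mem {d : ℕ} {m : F[X]} (hm : m ∈ monicsOfDegree F d) :
    1 + smallPrimesProd F * m ∈ monicsOfDegree F (d + (smallPrimesProd F).natDegree) := by
  obtain ⟨hmonic, rfl⟩ := mem_monicsOfDegree.1 hm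
  have hprod : (smallPrimesProd F * m).Monic := smallPrimesProd_monic.mul hmonic
  have hdeg : (smallPrimesProd F * m).natDegree = m.natDegree + (smallPrimesProd F).natDegree := by
    rw [smallPrimesProd_monic.natDegree_mul hmonic, add_comm]
  have hlt : (1 : F[X]).degree < (smallPrimesProd F * m).degree := by
    rw [degree_one, degree_eq_natDegree hprod.ne_zero, Nat.cast_pos, hdeg]
    exact Nat.add_pos_right _ natDegree_smallPrimesProd_pos
  exact mem_monicsOfDegree.2
    ⟨hprod.add_of_right hlt, (natDegree_add_eq_right_of_degree_lt hlt).trans hdeg⟩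

lemma exists_monic_associated_five_lt_natDegree {m z : F[X]} (hz : Irreducible z)
    (hdvd : z ∣ 1 + smallPrimesProd F * m) :
    ∃ Q : F[X], Q.Monic ∧ Associated Q z ∧ 5 < Q.natDegree := by
  have hassoc := normalize_associated z
  have hirr : Irreducible (normalize z) := hassoc.symm.irreducible hz
  refine ⟨normalize z, monic_normalize hz.ne_zero, hassoc, ?_⟩
  by_contra! hle
  have hsmall : normalize z ∣ smallPrimesProd F :=
    dvd_smallPrimesProd (mem_monicPrimesOfDegreeLE.2 ⟨monic_normalize hz.ne_zero, hirr, hle⟩)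
  exact hirr.not_isUnit (isUnit_of_dvd_one
    ((dvd_add_left (hsmall.mul_right m)).1 (hassoc.dvd.trans hdvd)))

lemma half_pow_five_add_mul_inv_le {x N G : ℝ} (hx : 0 < x) (hNG : N ≤ G) (hG : 32 * G ≤ x) :
    (1 / 2) ^ 5 + N * x⁻¹ ≤ (1 / 16 : ℝ) := by
  have : N * x⁻¹ ≤ 1 / 32 := by
    rw [← div_eq_mul_inv, div_le_iff₀ hx]
    linarith
  linarith

variable {u G d d' : ℕ}

lemma card_filter_not_squarefree_le (hd : (smallPrimesProd F).natDegree + 2 * u ≤ d)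
    (hdG : d + (smallPrimesProd F).natDegree ≤ G)
    (hG : 32 * (G : ℝ) ≤ (Fintype.card F : ℝ) ^ u) :
    (((monicsOfDegree F d).filter fun m => ¬ Squarefree (1 + smallPrimesProd F * m)).card : ℝ) ≤
      (Fintype.card F : ℝ) ^ d * (1 / 16) := by
  set e := (smallPrimesProd F).natDegree
  have hcover (m : F[X])
      (hm : m ∈ (monicsOfDegree F d).filter fun m => ¬ Squarefree (1 + smallPrimesProd F * m)) :
      ∃ Q : F[X], Q.Monic ∧ 5 < Q.natDegree ∧ Q.natDegree ≤ (d + e) / 2 ∧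
        m ∈ (monicsOfDegree F d).filter (Q ^ 2 ∣ 1 + smallPrimesProd F * ·) := by
    obtain ⟨hmd, hsq⟩ := Finset.mem_filter.1 hm
    obtain ⟨hmonic, hdeg⟩ := mem_monicsOfDegree.1 (one_add_smallPrimesProd_mul_mem hmd)
    rw [squarefree_iff_irreducible_sq_not_dvd_of_ne_zero hmonic.ne_zero] at hsq
    push Not at hsq
    obtain ⟨z, hz, hzz⟩ := hsq
    obtain ⟨Q, hQ, hassoc, hlarge⟩ :=
      exists_monic_associated_five_lt_natDegree hz ((dvd_mul_right z z).trans hzz)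
    have hQQ : Q ^ 2 ∣ 1 + smallPrimesProd F * m :=
      sq Q ▸ (mul_dvd_mul hassoc.dvd hassoc.dvd).trans hzz
    have hle := natDegree_le_of_dvd hQQ hmonic.ne_zero
    rw [hdeg, hQ.natDegree_pow] at hle
    exact ⟨Q, hQ, hlarge, by omega, Finset.mem_filter.2 ⟨hmd, hQQ⟩⟩
  refine (card_le_of_forall_exists_monic (b := d) (u := u) _ _ hcover fun Q hQ hle =>
    ⟨_, card_filter_dvd_one_add_mul_le _ (hQ.pow 2) d, ?_⟩).trans ?_
  · rw [hQ.natDegree_pow]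
    omega
  · gcongr
    exact half_pow_five_add_mul_inv_le (by positivity) (Nat.cast_le.2 (by omega)) hG

lemma card_filter_not_isCoprime_le (hd : (smallPrimesProd F).natDegree + 2 * u ≤ d)
    (hd' : (smallPrimesProd F).natDegree + 2 * u ≤ d')
    (hdG : d + (smallPrimesProd F).natDegree ≤ G)
    (hG : 32 * (G : ℝ) ≤ (Fintype.card F : ℝ) ^ u) :
    (((monicsOfDegree F d ×ˢ monicsOfDegree F d').filter fun m =>
      ¬ IsCoprime (1 + smallPrimesProd F * m.1) (1 + smallPrimesProd F * m.2)).card : ℝ) ≤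
      (Fintype.card F : ℝ) ^ (d + d') * (1 / 16) := by
  set e := (smallPrimesProd F).natDegree
  have hcover (m : F[X] × F[X])
      (hm : m ∈ (monicsOfDegree F d ×ˢ monicsOfDegree F d').filter fun m =>
        ¬ IsCoprime (1 + smallPrimesProd F * m.1) (1 + smallPrimesProd F * m.2)) :
      ∃ Q : F[X], Q.Monic ∧ 5 < Q.natDegree ∧ Q.natDegree ≤ d + e ∧
        m ∈ (monicsOfDegree F d).filter (Q ∣ 1 + smallPrimesProd F * ·) ×ˢ
          (monicsOfDegree F d').filter (Q ∣ 1 + smallPrimesProd F * ·) := by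
    obtain ⟨hmem, hcop⟩ := Finset.mem_filter.1 hm
    obtain ⟨hm₁, hm₂⟩ := Finset.mem_product.1 hmem
    obtain ⟨hmonic, hdeg⟩ := mem_monicsOfDegree.1 (one_add_smallPrimesProd_mul_mem hm₁)
    obtain ⟨z, hz, hz₁, hz₂⟩ : ∃ z, Irreducible z ∧ z ∣ 1 + smallPrimesProd F * m.1 ∧
        z ∣ 1 + smallPrimesProd F * m.2 := by
      by_contra! hno
      exact hcop (isCoprime_of_irreducible_dvd (fun h => hmonic.ne_zero h.1) hno)
    obtain ⟨Q, hQ, hassoc, hlarge⟩ := exists_monic_associated_five_lt_natDegree hz hz₁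
    have hQ₁ := hassoc.dvd.trans hz₁
    exact ⟨Q, hQ, hlarge, hdeg ▸ natDegree_le_of_dvd hQ₁ hmonic.ne_zero, Finset.mem_product.2
      ⟨Finset.mem_filter.2 ⟨hm₁, hQ₁⟩, Finset.mem_filter.2 ⟨hm₂, hassoc.dvd.trans hz₂⟩⟩⟩
  refine (card_le_of_forall_exists_monic (b := d + d') (u := u) _ _ hcover fun Q hQ hle =>
    ⟨(d - Q.natDegree) + (d' - Q.natDegree), ?_, by omega⟩).trans ?_
  · rw [Finset.card_product, pow_add]
    exact Nat.mul_le_mul (card_filter_dvd_one_add_mul_le _ hQ d)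
      (card_filter_dvd_one_add_mul_le _ hQ d')
  · gcongr
    exact half_pow_five_add_mul_inv_le (by positivity) (Nat.cast_le.2 (by omega)) hG

end SmallPrimes

section AdmissibleTriples

lemma card_product_le_card_filter_add {α : Type*} (s : α → Prop) (r : α → α → Prop)
    (A B C : Finset α) :
    A.card * B.card * C.card ≤
      ((A ×ˢ B ×ˢ C).filter fun t => s t.1 ∧ s t.2.1 ∧ s t.2.2 ∧
        r t.1 t.2.1 ∧ r t.1 t.2.2 ∧ r t.2.1 t.2.2).card +
      ((A.filter fun a => ¬s a).card * B.card * C.card +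
        A.card * (B.filter fun b => ¬s b).card * C.card +
        A.card * B.card * (C.filter fun c => ¬s c).card) +
      (((A ×ˢ B).filter fun t => ¬r t.1 t.2).card * C.card +
        ((A ×ˢ C).filter fun t => ¬r t.1 t.2).card * B.card +
        A.card * ((B ×ˢ C).filter fun t => ¬r t.1 t.2).card) := by
  let ind (p : Prop) : ℕ := if p then 1 else 0
  have pointwise (a b c : α) : 1 ≤ ind (s a ∧ s b ∧ s c ∧ r a b ∧ r a c ∧ r b c) +
      (ind (¬s a) + ind (¬s b) + ind (¬s c)) +
      (ind (¬r a b) + ind (¬r a c) + ind (¬r b c)) := by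
    by_cases good : s a ∧ s b ∧ s c ∧ r a b ∧ r a c ∧ r b c
    · simp only [ind, if_pos good]; omega
    · simp only [not_and_or] at good
      rcases good with h | h | h | h | h | h <;> simp only [ind, if_pos h] <;> omega
  have summed := Finset.sum_le_sum fun a (_ : a ∈ A) => Finset.sum_le_sum fun b (_ : b ∈ B) =>
    Finset.sum_le_sum fun c (_ : c ∈ C) => pointwise a b c
  simp only [Finset.card_filter, Finset.sum_product]
  simp only [Finset.sum_add_distrib, Finset.sum_const, ← Finset.mul_sum,
    smul_eq_mul, mul_one, ind] at summed ⊢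
  linarith

variable (F : Type*) [Field F] [Fintype F]

/-- The monic triples of degrees `(d₁, d₂, d₃)` consisting of squarefree, pairwise coprime
polynomials. -/
noncomputable def admissibleTriples (d₁ d₂ d₃ : ℕ) : Finset (F[X] × F[X] × F[X]) :=
  (monicsOfDegree F d₁ ×ˢ monicsOfDegree F d₂ ×ˢ monicsOfDegree F d₃).filter fun t =>
    Squarefree t.1 ∧ Squarefree t.2.1 ∧ Squarefree t.2.2 ∧
      IsCoprime t.1 t.2.1 ∧ IsCoprime t.1 t.2.2 ∧ IsCoprime t.2.1 t.2.2

variable {F}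

lemma mem_admissibleTriples {d₁ d₂ d₃ : ℕ} {t : F[X] × F[X] × F[X]} :
    t ∈ admissibleTriples F d₁ d₂ d₃ ↔
      (t.1 ∈ monicsOfDegree F d₁ ∧ t.2.1 ∈ monicsOfDegree F d₂ ∧ t.2.2 ∈ monicsOfDegree F d₃) ∧
      Squarefree t.1 ∧ Squarefree t.2.1 ∧ Squarefree t.2.2 ∧
        IsCoprime t.1 t.2.1 ∧ IsCoprime t.1 t.2.2 ∧ IsCoprime t.2.1 t.2.2 := by
  simp only [admissibleTriples, Finset.mem_filter, Finset.mem_product]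

lemma card_admissibleTriples_le (d₁ d₂ d₃ : ℕ) :
    (admissibleTriples F d₁ d₂ d₃).card ≤ Fintype.card F ^ (d₁ + d₂ + d₃) :=
  (Finset.card_filter_le _ _).trans_eq <| by
    simp only [Finset.card_product, card_monicsOfDegree]; ring

lemma card_filter_one_add_smallPrimesProd_mul_le (D₁ D₂ D₃ : ℕ) :
    ((monicsOfDegree F D₁ ×ˢ monicsOfDegree F D₂ ×ˢ monicsOfDegree F D₃).filter fun t =>
      Squarefree (1 + smallPrimesProd F * t.1) ∧ Squarefree (1 + smallPrimesProd F * t.2.1) ∧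
        Squarefree (1 + smallPrimesProd F * t.2.2) ∧
        IsCoprime (1 + smallPrimesProd F * t.1) (1 + smallPrimesProd F * t.2.1) ∧
        IsCoprime (1 + smallPrimesProd F * t.1) (1 + smallPrimesProd F * t.2.2) ∧
        IsCoprime (1 + smallPrimesProd F * t.2.1) (1 + smallPrimesProd F * t.2.2)).card ≤
      (admissibleTriples F (D₁ + (smallPrimesProd F).natDegree)
        (D₂ + (smallPrimesProd F).natDegree) (D₃ + (smallPrimesProd F).natDegree)).card := by
  let φ (m : F[X]) : F[X] := 1 + smallPrimesProd F * m
  have φ_injective : Function.Injective φ := fun a b hab =>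
    mul_left_cancel₀ smallPrimesProd_monic.ne_zero (add_left_cancel hab)
  refine Finset.card_le_card_of_injOn (Prod.map φ (Prod.map φ φ)) (fun t ht => ?_)
    (φ_injective.prodMap (φ_injective.prodMap φ_injective)).injOn
  simp only [Finset.coe_filter, Finset.mem_product, Set.mem_ofPred_eq] at ht
  exact mem_admissibleTriples.2 ⟨⟨one_add_smallPrimesProd_mul_mem ht.1.1,
    one_add_smallPrimesProd_mul_mem ht.1.2.1, one_add_smallPrimesProd_mul_mem ht.1.2.2⟩, ht.2⟩

lemma pow_le_two_mul_card_admissibleTriples {u G D₁ D₂ D₃ : ℕ}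
    (h₁ : (smallPrimesProd F).natDegree + 2 * u ≤ D₁)
    (h₂ : (smallPrimesProd F).natDegree + 2 * u ≤ D₂)
    (h₃ : (smallPrimesProd F).natDegree + 2 * u ≤ D₃)
    (hG₁ : D₁ + (smallPrimesProd F).natDegree ≤ G) (hG₂ : D₂ + (smallPrimesProd F).natDegree ≤ G)
    (hG₃ : D₃ + (smallPrimesProd F).natDegree ≤ G)
    (hG : 32 * (G : ℝ) ≤ (Fintype.card F : ℝ) ^ u) :
    (Fintype.card F : ℝ) ^ (D₁ + D₂ + D₃) ≤
      2 * (admissibleTriples F (D₁ + (smallPrimesProd F).natDegree)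
        (D₂ + (smallPrimesProd F).natDegree) (D₃ + (smallPrimesProd F).natDegree)).card := by
  have union_bound := card_product_le_card_filter_add
    (fun m => Squarefree (1 + smallPrimesProd F * m))
    (fun m m' => IsCoprime (1 + smallPrimesProd F * m) (1 + smallPrimesProd F * m'))
    (monicsOfDegree F D₁) (monicsOfDegree F D₂) (monicsOfDegree F D₃)
  have good := card_filter_one_add_smallPrimesProd_mul_le (F := F) D₁ D₂ D₃
  rify at union_bound good
  simp only [card_monicsOfDegree, Nat.cast_pow] at union_bound
  have sqf₁ := card_filter_not_squarefree_le h₁ hG₁ hG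
  have sqf₂ := card_filter_not_squarefree_le h₂ hG₂ hG
  have sqf₃ := card_filter_not_squarefree_le h₃ hG₃ hG
  have cop₁₂ := card_filter_not_isCoprime_le h₁ h₂ hG₁ hG
  have cop₁₃ := card_filter_not_isCoprime_le h₁ h₃ hG₁ hG
  have cop₂₃ := card_filter_not_isCoprime_le h₂ h₃ hG₂ hG
  set q : ℝ := (Fintype.card F : ℝ)
  have hq : 0 ≤ q := Nat.cast_nonneg _
  have bound : q ^ D₁ * q ^ D₂ * q ^ D₃ ≤
      (admissibleTriples F (D₁ + (smallPrimesProd F).natDegree)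
        (D₂ + (smallPrimesProd F).natDegree) (D₃ + (smallPrimesProd F).natDegree)).card +
      (q ^ D₁ * (1 / 16) * q ^ D₂ * q ^ D₃ + q ^ D₁ * (q ^ D₂ * (1 / 16)) * q ^ D₃ +
        q ^ D₁ * q ^ D₂ * (q ^ D₃ * (1 / 16))) +
      (q ^ (D₁ + D₂) * (1 / 16) * q ^ D₃ + q ^ (D₁ + D₃) * (1 / 16) * q ^ D₂ +
        q ^ D₁ * (q ^ (D₂ + D₃) * (1 / 16))) := union_bound.trans (by gcongr)
  have := pow_nonneg hq (D₁ + D₂ + D₃)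
  simp only [pow_add] at bound this ⊢
  linarith

end AdmissibleTriples

section AdmissibleDegrees

lemma le_Lg (a b c : ℕ) : a + b + c ≤ Lg a b c := by
  unfold Lg; split_ifs <;> omega

lemma Lg_le (a b c : ℕ) : Lg a b c ≤ a + b + c + 1 := by
  unfold Lg; split_ifs <;> omega

lemma Lg_swap_left (a b c : ℕ) : Lg b a c = Lg a b c := by
  unfold Lg; simp only [Nat.even_iff]; split_ifs <;> omega

lemma Lg_swap_right (a b c : ℕ) : Lg a c b = Lg a b c := by
  unfold Lg; simp only [Nat.even_iff]; split_ifs <;> omega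

/-- The degrees `(deg f₁, deg f₂, deg f₃)` of the triples in `F̂_g`. -/
noncomputable def admissibleDegrees (g : ℕ) : Finset (ℕ × ℕ × ℕ) :=
  (Finset.range (g + 4) ×ˢ Finset.range (g + 4) ×ˢ Finset.range (g + 4)).filter fun d =>
    Lg d.1 d.2.1 d.2.2 = g + 3 ∧ ({d.1, d.2.1, d.2.2} : Multiset ℕ) ≠ {g + 3, 0, 0} ∧
      ({d.1, d.2.1, d.2.2} : Multiset ℕ) ≠ {g + 2, 0, 0}

variable {g : ℕ} {d : ℕ × ℕ × ℕ}

lemma mem_admissibleDegrees : d ∈ admissibleDegrees g ↔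
    Lg d.1 d.2.1 d.2.2 = g + 3 ∧ ({d.1, d.2.1, d.2.2} : Multiset ℕ) ≠ {g + 3, 0, 0} ∧
      ({d.1, d.2.1, d.2.2} : Multiset ℕ) ≠ {g + 2, 0, 0} := by
  have := le_Lg d.1 d.2.1 d.2.2
  simp only [admissibleDegrees, Finset.mem_filter, Finset.mem_product, Finset.mem_range,
    and_iff_right_iff_imp]
  omega

lemma card_admissibleDegrees_le (g : ℕ) : (admissibleDegrees g).card ≤ (g + 4) ^ 3 :=
  (Finset.card_filter_le _ _).trans_eq <| by
    simp only [Finset.card_product, Finset.card_range]; ring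

lemma sum_le_of_mem_admissibleDegrees (hd : d ∈ admissibleDegrees g) :
    d.1 + d.2.1 + d.2.2 ≤ g + 3 :=
  (mem_admissibleDegrees.1 hd).1 ▸ le_Lg _ _ _

lemma le_sum_of_mem_admissibleDegrees (hd : d ∈ admissibleDegrees g) :
    g + 2 ≤ d.1 + d.2.1 + d.2.2 := by
  have := Lg_le d.1 d.2.1 d.2.2
  have := (mem_admissibleDegrees.1 hd).1
  omega

lemma one_le_of_mem_admissibleDegrees (hd : d ∈ admissibleDegrees g) : 1 ≤ d.1 + d.2.1 := by
  have hle := sum_le_of_mem_admissibleDegrees hd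
  have hge := le_sum_of_mem_admissibleDegrees hd
  obtain ⟨-, hne₃, hne₂⟩ := mem_admissibleDegrees.1 hd
  by_contra! hlt
  obtain ⟨d₁, d₂, d₃⟩ := d
  dsimp only at hle hge hlt
  obtain rfl : d₁ = 0 := by omega
  obtain rfl : d₂ = 0 := by omega
  have rotate : ({0, 0, d₃} : Multiset ℕ) = {d₃, 0, 0} := Multiset.add_comm {0, 0} {d₃}
  rcases (by omega : d₃ = g + 3 ∨ d₃ = g + 2) with rfl | rfl
  · exact hne₃ rotate
  · exact hne₂ rotate

lemma card_filter_admissibleDegrees_lt_le (g m : ℕ) :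
    ((admissibleDegrees g).filter fun d => d.1 < m ∧ d.2.1 < m).card ≤ 2 * m ^ 2 := by
  calc ((admissibleDegrees g).filter fun d => d.1 < m ∧ d.2.1 < m).card
      ≤ (Finset.range m ×ˢ Finset.range m ×ˢ Finset.range 2).card := by
        refine Finset.card_le_card_of_injOn
          (fun d => (d.1, d.2.1, g + 3 - (d.1 + d.2.1 + d.2.2))) (fun d hd => ?_)
          fun d hd d' hd' h => ?_
        · obtain ⟨hd, hlt⟩ := Finset.mem_filter.1 (Finset.mem_coe.1 hd)
          have := le_sum_of_mem_admissibleDegrees hd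
          simp only [Finset.coe_product, Set.mem_prod, Finset.coe_range, Set.mem_Iio]
          omega
        · have := sum_le_of_mem_admissibleDegrees (Finset.mem_filter.1 hd).1
          have := sum_le_of_mem_admissibleDegrees (Finset.mem_filter.1 hd').1
          simp only [Prod.mk.injEq] at h
          refine Prod.ext ?_ (Prod.ext ?_ ?_) <;> omega
    _ = 2 * m ^ 2 := by simp only [Finset.card_product, Finset.card_range]; ring

lemma mem_admissibleDegrees_of_even {a b c : ℕ} (ha : 0 < a) (hb : 0 < b) (hc : 0 < c)
    (hac : Even (a + c)) (hbc : Even (b + c)) (hsum : a + b + c = g + 3) :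
    (a, b, c) ∈ admissibleDegrees g := by
  have zero_notMem : 0 ∉ ({a, b, c} : Multiset ℕ) := by
    simp only [Multiset.insert_eq_cons, Multiset.mem_cons, Multiset.mem_singleton]
    omega
  refine mem_admissibleDegrees.2 ⟨(if_pos ⟨hac, hbc⟩).trans hsum, ?_, ?_⟩ <;>
    exact fun h => zero_notMem (h ▸ by simp)

end AdmissibleDegrees

section MonicFamily

variable (F : Type*) [Field F] [Fintype F]

/-- The set `F_g` of monic triples in `F̂_g`, as a finset. -/
noncomputable def monicFamily (g : ℕ) : Finset (F[X] × F[X] × F[X]) :=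
  (admissibleDegrees g).biUnion fun d => admissibleTriples F d.1 d.2.1 d.2.2

variable {F} {g : ℕ}

lemma mem_monicFamily {t : F[X] × F[X] × F[X]} : t ∈ monicFamily F g ↔ t ∈ FSet F g := by
  simp only [monicFamily, Finset.mem_biUnion, mem_admissibleTriples, mem_monicsOfDegree,
    mem_admissibleDegrees, FSet, FhatSet, Set.mem_ofPred_eq]
  constructor
  · rintro ⟨⟨_, _, _⟩, hd, ⟨⟨h₁, rfl⟩, ⟨h₂, rfl⟩, h₃, rfl⟩, ht⟩
    tauto
  · intro h
    exact ⟨(t.1.natDegree, t.2.1.natDegree, t.2.2.natDegree), by tauto⟩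

lemma sum_monicFamily {β : Type*} [AddCommMonoid β] (g : ℕ) (φ : F[X] × F[X] × F[X] → β) :
    ∑ t ∈ monicFamily F g, φ t =
      ∑ d ∈ admissibleDegrees g, ∑ t ∈ admissibleTriples F d.1 d.2.1 d.2.2, φ t := by
  refine Finset.sum_biUnion fun d _ d' _ hne => Finset.disjoint_left.2 fun t ht ht' => hne ?_
  simp only [mem_admissibleTriples, mem_monicsOfDegree] at ht ht'
  obtain ⟨⟨⟨-, h₁⟩, ⟨-, h₂⟩, -, h₃⟩, -⟩ := ht
  obtain ⟨⟨⟨-, h₁'⟩, ⟨-, h₂'⟩, -, h₃'⟩, -⟩ := ht'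
  exact Prod.ext (h₁.symm.trans h₁') (Prod.ext (h₂.symm.trans h₂') (h₃.symm.trans h₃'))

lemma card_monicFamily (g : ℕ) : (monicFamily F g).card =
    ∑ d ∈ admissibleDegrees g, (admissibleTriples F d.1 d.2.1 d.2.2).card := by
  simp only [Finset.card_eq_sum_ones, sum_monicFamily]

lemma sum_monicFamily_swap_left {β : Type*} [AddCommMonoid β] (φ : F[X] × F[X] × F[X] → β) :
    ∑ t ∈ monicFamily F g, φ t = ∑ t ∈ monicFamily F g, φ (t.2.1, t.1, t.2.2) := by
  have swap_mem (t : F[X] × F[X] × F[X]) (ht : t ∈ monicFamily F g) :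
      (t.2.1, t.1, t.2.2) ∈ monicFamily F g := by
    rw [mem_monicFamily] at ht ⊢
    obtain ⟨⟨h₁, h₂, h₃, h₁₂, h₁₃, h₂₃, m₃, hL, hne₃, hne₂⟩, m₁, m₂⟩ := ht
    exact ⟨⟨h₂, h₁, h₃, h₁₂.symm, h₂₃, h₁₃, m₃, (Lg_swap_left _ _ _).trans hL,
      (Multiset.cons_swap _ _ _).trans_ne hne₃, (Multiset.cons_swap _ _ _).trans_ne hne₂⟩, m₂, m₁⟩
  exact Finset.sum_nbij' (fun t => (t.2.1, t.1, t.2.2)) (fun t => (t.2.1, t.1, t.2.2))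
    swap_mem swap_mem (fun _ _ => rfl) (fun _ _ => rfl) fun _ _ => rfl

lemma sum_monicFamily_swap_right {β : Type*} [AddCommMonoid β] (φ : F[X] × F[X] × F[X] → β) :
    ∑ t ∈ monicFamily F g, φ t = ∑ t ∈ monicFamily F g, φ (t.1, t.2.2, t.2.1) := by
  have swap (a b c : ℕ) : ({a, c, b} : Multiset ℕ) = {a, b, c} :=
    congrArg (a ::ₘ ·) (Multiset.pair_comm c b)
  have swap_mem (t : F[X] × F[X] × F[X]) (ht : t ∈ monicFamily F g) :
      (t.1, t.2.2, t.2.1) ∈ monicFamily F g := by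
    rw [mem_monicFamily] at ht ⊢
    obtain ⟨⟨h₁, h₂, h₃, h₁₂, h₁₃, h₂₃, m₃, hL, hne₃, hne₂⟩, m₁, m₂⟩ := ht
    exact ⟨⟨h₁, h₃, h₂, h₁₃, h₁₂, h₂₃.symm, m₂, (Lg_swap_right _ _ _).trans hL,
      (swap _ _ _).trans_ne hne₃, (swap _ _ _).trans_ne hne₂⟩, m₁, m₃⟩
  exact Finset.sum_nbij' (fun t => (t.1, t.2.2, t.2.1)) (fun t => (t.1, t.2.2, t.2.1))
    swap_mem swap_mem (fun _ _ => rfl) (fun _ _ => rfl) fun _ _ => rfl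

end MonicFamily

section MonicFamilyLowerBound

variable {F : Type*} [Field F] [Fintype F] {g : ℕ}

lemma mul_add_three_le_two_pow (hg : 1000000 ≤ g) : 32 * (g + 3) ≤ 2 ^ (g / 20 / 2) := by
  set w := g / 80
  have hw : w + 1 ≤ 2 ^ w := Nat.lt_two_pow_self
  calc 32 * (g + 3) ≤ (w + 1) * (w + 1) := by
        have : g + 3 ≤ 80 * w + 83 := by omega
        have : 12000 ≤ w := by omega
        nlinarith
    _ ≤ 2 ^ w * 2 ^ w := Nat.mul_le_mul hw hw
    _ = 2 ^ (w + w) := (pow_add _ _ _).symm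
    _ ≤ 2 ^ (g / 20 / 2) := Nat.pow_le_pow_right (by norm_num) (by omega)

/-- A two-parameter supply of degrees in `admissibleDegrees g`, all congruent modulo `2` and
all of order `g` when `p.1` and `p.2` lie in `[g / 20, g / 10)`. -/
def balancedDegrees (g : ℕ) (p : ℕ × ℕ) : ℕ × ℕ × ℕ :=
  (2 * p.1 + (g + 3) % 2, 2 * p.2 + (g + 3) % 2,
    g + 3 - (2 * p.1 + (g + 3) % 2) - (2 * p.2 + (g + 3) % 2))

lemma balancedDegrees_injective (g : ℕ) : Function.Injective (balancedDegrees g) := by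
  intro p p' h
  simp only [balancedDegrees, Prod.mk.injEq] at h
  apply Prod.ext <;> omega

lemma balancedDegrees_mem_admissibleDegrees (hg : 20 ≤ g) {p : ℕ × ℕ}
    (hp : p ∈ Finset.Ico (g / 20) (2 * (g / 20)) ×ˢ Finset.Ico (g / 20) (2 * (g / 20))) :
    balancedDegrees g p ∈ admissibleDegrees g := by
  simp only [Finset.mem_product, Finset.mem_Ico] at hp
  exact mem_admissibleDegrees_of_even (by omega) (by omega) (by omega)
    (Nat.even_iff.2 (by omega)) (Nat.even_iff.2 (by omega)) (by omega)

lemma pow_le_two_mul_card_admissibleTriples_balancedDegrees (hg : 1000000 ≤ g)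
    (hge : 100 * (smallPrimesProd F).natDegree ≤ g) {p : ℕ × ℕ}
    (hp : p ∈ Finset.Ico (g / 20) (2 * (g / 20)) ×ˢ Finset.Ico (g / 20) (2 * (g / 20))) :
    (Fintype.card F : ℝ) ^ (g + 3 - 3 * (smallPrimesProd F).natDegree) ≤
      2 * (admissibleTriples F (balancedDegrees g p).1 (balancedDegrees g p).2.1
        (balancedDegrees g p).2.2).card := by
  have hG : 32 * ((g + 3 : ℕ) : ℝ) ≤ (Fintype.card F : ℝ) ^ (g / 20 / 2) := by
    have hq : 2 ≤ Fintype.card F := Fintype.one_lt_card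
    exact_mod_cast (mul_add_three_le_two_pow hg).trans (Nat.pow_le_pow_left hq _)
  set e := (smallPrimesProd F).natDegree
  simp only [balancedDegrees, Finset.mem_product, Finset.mem_Ico] at hp ⊢
  set a := 2 * p.1 + (g + 3) % 2
  set b := 2 * p.2 + (g + 3) % 2
  obtain ⟨D₁, h₁⟩ : ∃ D, a = D + e := ⟨a - e, by omega⟩
  obtain ⟨D₂, h₂⟩ : ∃ D, b = D + e := ⟨b - e, by omega⟩
  obtain ⟨D₃, h₃⟩ : ∃ D, g + 3 - a - b = D + e := ⟨g + 3 - a - b - e, by omega⟩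
  rw [h₃, h₁, h₂, show g + 3 - 3 * e = D₁ + D₂ + D₃ by omega]
  exact pow_le_two_mul_card_admissibleTriples (by omega) (by omega) (by omega) (by omega)
    (by omega) (by omega) hG

lemma sq_mul_pow_le_two_mul_card_monicFamily (hg : 1000000 ≤ g)
    (hge : 100 * (smallPrimesProd F).natDegree ≤ g) :
    ((g / 20 : ℕ) : ℝ) ^ 2 * (Fintype.card F : ℝ) ^ (g + 3 - 3 * (smallPrimesProd F).natDegree) ≤
      2 * (monicFamily F g).card := by
  set I := Finset.Ico (g / 20) (2 * (g / 20)) with hI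
  have card_I : I.card = g / 20 := by rw [hI, Nat.card_Ico]; omega
  have sub_family : ∑ p ∈ I ×ˢ I, (admissibleTriples F (balancedDegrees g p).1
      (balancedDegrees g p).2.1 (balancedDegrees g p).2.2).card ≤ (monicFamily F g).card := by
    rw [card_monicFamily, ← Finset.sum_image (f := fun d : ℕ × ℕ × ℕ =>
      (admissibleTriples F d.1 d.2.1 d.2.2).card) (balancedDegrees_injective g).injOn]
    exact Finset.sum_le_sum_of_subset <| Finset.image_subset_iff.2 fun p hp =>
      balancedDegrees_mem_admissibleDegrees (by omega) hp
  rify at sub_family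
  calc ((g / 20 : ℕ) : ℝ) ^ 2 * (Fintype.card F : ℝ) ^ (g + 3 - 3 * (smallPrimesProd F).natDegree)
      = ∑ _p ∈ I ×ˢ I, (Fintype.card F : ℝ) ^ (g + 3 - 3 * (smallPrimesProd F).natDegree) := by
        rw [Finset.sum_const, Finset.card_product, card_I, nsmul_eq_mul, Nat.cast_mul, sq]
    _ ≤ ∑ p ∈ I ×ˢ I, 2 * ((admissibleTriples F (balancedDegrees g p).1
          (balancedDegrees g p).2.1 (balancedDegrees g p).2.2).card : ℝ) :=
        Finset.sum_le_sum fun p hp =>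
          pow_le_two_mul_card_admissibleTriples_balancedDegrees hg hge hp
    _ ≤ 2 * (monicFamily F g).card := by
        rw [← Finset.mul_sum]; gcongr

variable (F) in
lemma exists_mul_sq_mul_pow_le_card_monicFamily : ∃ c : ℝ, 0 < c ∧ ∀ᶠ g : ℕ in Filter.atTop,
    c * (g : ℝ) ^ 2 * (Fintype.card F : ℝ) ^ g ≤ (monicFamily F g).card := by
  set e := (smallPrimesProd F).natDegree
  set q : ℝ := (Fintype.card F : ℝ)
  have hq : 1 ≤ q := Nat.one_le_cast.2 Fintype.card_pos
  refine ⟨(3200 * q ^ (3 * e))⁻¹, by positivity, ?_⟩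
  filter_upwards [Filter.eventually_ge_atTop (1000000 + 100 * e)] with g hg
  have bound := sq_mul_pow_le_two_mul_card_monicFamily (F := F) (g := g) (by omega) (by omega)
  have hdiv : (g : ℝ) / 40 ≤ (g / 20 : ℕ) := by
    rw [div_le_iff₀ (by norm_num)]
    exact_mod_cast (by omega : g ≤ g / 20 * 40)
  rw [mul_assoc, inv_mul_le_iff₀ (by positivity)]
  calc (g : ℝ) ^ 2 * q ^ g = 1600 * (((g : ℝ) / 40) ^ 2 * q ^ g) := by ring
    _ ≤ 1600 * (((g / 20 : ℕ) : ℝ) ^ 2 * q ^ (3 * e + (g + 3 - 3 * e))) := by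
        gcongr
        omega
    _ = 1600 * q ^ (3 * e) * (((g / 20 : ℕ) : ℝ) ^ 2 * q ^ (g + 3 - 3 * e)) := by
        rw [pow_add]; ring
    _ ≤ 1600 * q ^ (3 * e) * (2 * (monicFamily F g).card) := by gcongr
    _ = 3200 * q ^ (3 * e) * (monicFamily F g).card := by ring

end MonicFamilyLowerBound

section Scaling

variable {F : Type*} [Field F]

/-- Rescales the first two entries of a triple; this is how `F̂_g` arises from its monic part. -/
noncomputable def scaleTriple (y : (Fˣ × Fˣ) × F[X] × F[X] × F[X]) : F[X] × F[X] × F[X] :=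
  (C (y.1.1 : F) * y.2.1, C (y.1.2 : F) * y.2.2.1, y.2.2.2)

lemma scaleTriple_mem_FhatSet_iff {g : ℕ} {y : (Fˣ × Fˣ) × F[X] × F[X] × F[X]} :
    scaleTriple y ∈ FhatSet F g ↔ y.2 ∈ FhatSet F g := by
  have isUnit_C (c : Fˣ) : IsUnit (C (c : F)) := c.isUnit.map C
  have squarefree_C_mul (c : Fˣ) (f : F[X]) : Squarefree (C (c : F) * f) ↔ Squarefree f :=
    (associated_unit_mul_left f _ (isUnit_C c)).squarefree_iff
  have natDegree_C_mul (c : Fˣ) (f : F[X]) : (C (c : F) * f).natDegree = f.natDegree :=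
    Polynomial.natDegree_C_mul c.ne_zero
  simp only [scaleTriple, FhatSet, Set.mem_ofPred_eq, squarefree_C_mul, natDegree_C_mul,
    isCoprime_mul_unit_left_left (isUnit_C _), isCoprime_mul_unit_left_right (isUnit_C _)]

lemma eq_and_eq_of_C_mul_eq_C_mul {c c' : Fˣ} {f f' : F[X]} (hf : f.Monic) (hf' : f'.Monic)
    (h : C (c : F) * f = C (c' : F) * f') : c = c' ∧ f = f' := by
  have hc : (c : F) = c' := by
    simpa only [leadingCoeff_mul, leadingCoeff_C, hf.leadingCoeff, hf'.leadingCoeff, mul_one]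
      using congrArg leadingCoeff h
  rw [hc] at h
  exact ⟨Units.ext hc, mul_left_cancel₀ (C_ne_zero.2 c'.ne_zero) h⟩

lemma exists_C_mul_monic_eq {f : F[X]} (hf : f ≠ 0) :
    ∃ (c : Fˣ) (f' : F[X]), f'.Monic ∧ C (c : F) * f' = f := by
  have hlead : f.leadingCoeff ≠ 0 := leadingCoeff_ne_zero.2 hf
  refine ⟨Units.mk0 _ hlead, C f.leadingCoeff⁻¹ * f,
    monic_C_mul_of_mul_leadingCoeff_eq_one (inv_mul_cancel₀ hlead), ?_⟩
  rw [Units.val_mk0, ← mul_assoc, ← C_mul, mul_inv_cancel₀ hlead, C_1, one_mul]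

variable [Fintype F]

lemma FhatSet_eq_image_scaleTriple (g : ℕ) : FhatSet F g =
    (((Finset.univ : Finset (Fˣ × Fˣ)) ×ˢ monicFamily F g).image scaleTriple :
      Finset (F[X] × F[X] × F[X])) := by
  ext ⟨f₁, f₂, f₃⟩
  simp only [Finset.coe_image, Set.mem_image, Finset.mem_coe, Finset.mem_product,
    Finset.mem_univ, true_and, mem_monicFamily]
  constructor
  · intro h
    obtain ⟨c₁, f₁', hf₁', rfl⟩ := exists_C_mul_monic_eq h.1.ne_zero
    obtain ⟨c₂, f₂', hf₂', rfl⟩ := exists_C_mul_monic_eq h.2.1.ne_zero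
    exact ⟨((c₁, c₂), f₁', f₂', f₃), ⟨scaleTriple_mem_FhatSet_iff.1 h, hf₁', hf₂'⟩, rfl⟩
  · rintro ⟨y, hy, hscale⟩
    exact hscale ▸ scaleTriple_mem_FhatSet_iff.2 hy.1

lemma injOn_scaleTriple (g : ℕ) : Set.InjOn scaleTriple
    (((Finset.univ : Finset (Fˣ × Fˣ)) ×ˢ monicFamily F g : Finset _) :
      Set ((Fˣ × Fˣ) × F[X] × F[X] × F[X])) := by
  rintro ⟨⟨c₁, c₂⟩, f₁, f₂, f₃⟩ h ⟨⟨c₁', c₂'⟩, f₁', f₂', f₃'⟩ h' heq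
  simp only [Finset.mem_coe, Finset.mem_product, Finset.mem_univ, true_and, mem_monicFamily] at h h'
  simp only [scaleTriple, Prod.mk.injEq] at heq
  obtain ⟨rfl, rfl⟩ := eq_and_eq_of_C_mul_eq_C_mul h.2.1 h'.2.1 heq.1
  obtain ⟨rfl, rfl⟩ := eq_and_eq_of_C_mul_eq_C_mul h.2.2 h'.2.2 heq.2.1
  rw [heq.2.2]

lemma ncard_FhatSet (g : ℕ) :
    (FhatSet F g).ncard = Fintype.card (Fˣ × Fˣ) * (monicFamily F g).card := by
  rw [FhatSet_eq_image_scaleTriple, Set.ncard_coe_finset,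
    Finset.card_image_of_injOn (injOn_scaleTriple g), Finset.card_product, Finset.card_univ]

lemma finsum_FhatSet {R : Type*} [Semiring R] (g : ℕ) (φ : F[X] × F[X] × F[X] → R)
    (hφ : ∀ y, φ (scaleTriple y) = φ y.2) :
    ∑ᶠ t ∈ FhatSet F g, φ t = Fintype.card (Fˣ × Fˣ) * ∑ t ∈ monicFamily F g, φ t := by
  rw [FhatSet_eq_image_scaleTriple, finsum_mem_coe_finset,
    Finset.sum_image (injOn_scaleTriple g), Finset.sum_product]
  simp only [hφ, Finset.sum_const, Finset.card_univ, nsmul_eq_mul]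

end Scaling

section CharacterSumsOverTriples

variable {F : Type*} [Field F] [Fintype F]

lemma sum_admissibleTriples_swap {β : Type*} [AddCommMonoid β] (φ : F[X] × F[X] × F[X] → β)
    (d₁ d₂ d₃ : ℕ) : ∑ t ∈ admissibleTriples F d₁ d₂ d₃, φ t =
      ∑ t ∈ admissibleTriples F d₂ d₁ d₃, φ (t.2.1, t.1, t.2.2) := by
  have swap_mem (a b : ℕ) (t : F[X] × F[X] × F[X]) (ht : t ∈ admissibleTriples F a b d₃) :
      (t.2.1, t.1, t.2.2) ∈ admissibleTriples F b a d₃ := by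
    rw [mem_admissibleTriples] at ht ⊢
    have := ht.2.2.2.2.1.symm
    tauto
  exact Finset.sum_nbij' (fun t => (t.2.1, t.1, t.2.2)) (fun t => (t.2.1, t.1, t.2.2))
    (swap_mem _ _) (swap_mem _ _) (fun _ _ => rfl) (fun _ _ => rfl) fun _ _ => rfl

lemma sum_admissibleTriples_eq_sum_sum (ψ : F[X] →* ℤ) (d₁ d₂ d₃ : ℕ) :
    ∑ t ∈ admissibleTriples F d₁ d₂ d₃, ψ (t.1 * t.2.1) =
      ∑ f₂ ∈ monicsOfDegree F d₂, ∑ f₃ ∈ monicsOfDegree F d₃,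
        (if Squarefree f₂ ∧ Squarefree f₃ ∧ IsCoprime f₂ f₃ then ψ f₂ else 0) *
          ∑ f₁ ∈ (monicsOfDegree F d₁).filter fun f =>
            Squarefree f ∧ IsCoprime f (f₂ * f₃), ψ f₁ := by
  rw [admissibleTriples, Finset.sum_filter, Finset.sum_product_right, Finset.sum_product]
  refine Finset.sum_congr rfl fun f₂ _ => Finset.sum_congr rfl fun f₃ _ => ?_
  rw [Finset.sum_filter, Finset.mul_sum]
  refine Finset.sum_congr rfl fun f₁ _ => ?_
  rw [ite_zero_mul_ite_zero, map_mul, mul_comm (ψ f₁)]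
  exact if_congr (by rw [IsCoprime.mul_right_iff]; tauto) rfl rfl

lemma abs_sum_admissibleTriples_le {ψ : F[X] →* ℤ} (hψ : ∀ f, |ψ f| ≤ 1) {n : ℕ}
    (hzero : ∀ e, n ≤ e → ∑ f ∈ monicsOfDegree F e, ψ f = 0) (d₁ d₂ d₃ : ℕ) :
    |((∑ t ∈ admissibleTriples F d₁ d₂ d₃, ψ (t.1 * t.2.1) : ℤ) : ℝ)| ≤
      √(Fintype.card F) ^ (d₁ + n) * (Fintype.card F : ℝ) ^ (d₂ + d₃) *
        ((d₁ + 1) * (d₂ + 1) * (d₃ + 1)) := by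
  have summand_le (f₂ f₃ : F[X]) (hf₂ : f₂.Monic) (hf₃ : f₃.Monic) :
      |(((if Squarefree f₂ ∧ Squarefree f₃ ∧ IsCoprime f₂ f₃ then ψ f₂ else 0) *
        ∑ f₁ ∈ (monicsOfDegree F d₁).filter fun f =>
          Squarefree f ∧ IsCoprime f (f₂ * f₃), ψ f₁ : ℤ) : ℝ)| ≤
      √(Fintype.card F) ^ (d₁ + n) *
        ((d₁ + 1) * ((monicDivisors f₂).card * (monicDivisors f₃).card)) := by
    rw [Int.cast_mul, abs_mul]
    refine (mul_le_of_le_one_left (abs_nonneg _) ?_).trans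
      ((abs_sum_squarefree_coprime_le hψ hzero d₁ (mul_ne_zero hf₂.ne_zero hf₃.ne_zero)).trans ?_)
    · split_ifs
      · exact_mod_cast hψ f₂
      · simp
    · gcongr
      exact_mod_cast card_monicDivisors_mul_le hf₂.ne_zero hf₃.ne_zero
  have sum_card_monicDivisors (d : ℕ) : ∑ f ∈ monicsOfDegree F d, ((monicDivisors f).card : ℝ) =
      (d + 1) * (Fintype.card F : ℝ) ^ d := by
    exact_mod_cast sum_monicsOfDegree_card_monicDivisors (F := F) d
  rw [sum_admissibleTriples_eq_sum_sum, Int.cast_sum]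
  calc _ ≤ ∑ f₂ ∈ monicsOfDegree F d₂, ∑ f₃ ∈ monicsOfDegree F d₃,
        √(Fintype.card F) ^ (d₁ + n) *
          ((d₁ + 1) * ((monicDivisors f₂).card * (monicDivisors f₃).card)) := by
        refine (Finset.abs_sum_le_sum_abs _ _).trans (Finset.sum_le_sum fun f₂ hf₂ => ?_)
        rw [Int.cast_sum]
        exact (Finset.abs_sum_le_sum_abs _ _).trans <| Finset.sum_le_sum fun f₃ hf₃ =>
          summand_le f₂ f₃ (mem_monicsOfDegree.1 hf₂).1 (mem_monicsOfDegree.1 hf₃).1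
    _ = _ := by
        simp only [← Finset.mul_sum, ← Finset.sum_mul, sum_card_monicDivisors, pow_add]
        ring

end CharacterSumsOverTriples

section AverageOverMonicFamily

variable {F K : Type*} [Field F] [Field K] [Algebra F K]

lemma card_filter_aeval_eq_zero_le {f : F[X]} (hf : f ≠ 0) (s : Finset K) :
    (s.filter fun x => aeval x f = 0).card ≤ f.natDegree := by
  refine (Finset.card_le_card fun x hx => ?_).trans
    ((Multiset.toFinset_card_le (f.aroots K)).trans (card_roots_map_le_natDegree f))
  exact Multiset.mem_toFinset.2 (mem_aroots.2 ⟨hf, (Finset.mem_filter.1 hx).2⟩)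

variable [Fintype F] [Fintype K] {g m : ℕ}

lemma abs_sum_quadraticChar_aeval_fixed_sub_le (hF : Odd (Fintype.card F))
    (hK : Fintype.card K = (Fintype.card F ^ m) ^ 2) {f : F[X]} (hf : f ≠ 0) :
    |∑ x : K with x ^ Fintype.card F ^ m = x, quadraticChar K (aeval x f) -
      (Fintype.card F : ℤ) ^ m| ≤ f.natDegree := by
  have value (x : K) (hx : x ∈ Finset.univ.filter fun x : K => x ^ Fintype.card F ^ m = x) :
      quadraticChar K (aeval x f) = 1 - if aeval x f = 0 then 1 else 0 := by
    split_ifs with h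
    · rw [h, MulChar.map_zero, sub_self]
    · rw [quadraticChar_aeval_eq_one hF hK (Finset.mem_filter.1 hx).2 h, sub_zero]
  rw [Finset.sum_congr rfl value, Finset.sum_sub_distrib, Finset.sum_const,
    card_filter_pow_eq_self hK, Finset.sum_boole, nsmul_one, Nat.cast_pow, sub_sub_cancel_left,
    abs_neg, Nat.abs_cast, Nat.cast_le]
  exact card_filter_aeval_eq_zero_le hf _

lemma abs_sum_quadraticChar_aeval_not_fixed_le (hF : Odd (Fintype.card F))
    (hK : Fintype.card K = (Fintype.card F ^ m) ^ 2) {f : F[X]} (hf : Squarefree f)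
    (hdeg : 1 ≤ f.natDegree) :
    |∑ x : K with x ^ Fintype.card F ^ m ≠ x, quadraticChar K (aeval x f)| ≤
      (14 * f.natDegree + 1) * (Fintype.card F : ℤ) ^ m := by
  have weil := abs_sum_quadraticChar_aeval_le hF hK hf hdeg
  have fixed := abs_sum_quadraticChar_le_card
    (Finset.univ.filter fun x : K => x ^ Fintype.card F ^ m = x) fun x => aeval x f
  rw [card_filter_pow_eq_self hK, Nat.cast_pow] at fixed
  rw [← Finset.sum_filter_add_sum_filter_not Finset.univ
    (fun x : K => x ^ Fintype.card F ^ m = x)] at weil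
  rw [abs_le] at weil fixed ⊢
  constructor <;> linarith

lemma abs_sum_admissibleTriples_quadraticChar_le_of_lt (hF : Odd (Fintype.card F))
    (hK : Fintype.card K = (Fintype.card F ^ m) ^ 2) {d : ℕ × ℕ × ℕ}
    (hd : d ∈ admissibleDegrees g) (h₁ : d.1 < 12 * m) (h₂ : d.2.1 < 12 * m) :
    |∑ t ∈ admissibleTriples F d.1 d.2.1 d.2.2, ∑ x : K with x ^ Fintype.card F ^ m ≠ x,
      quadraticChar K (aeval x (t.1 * t.2.1))| ≤
      (Fintype.card F : ℤ) ^ (g + 3) * (336 * m * (Fintype.card F : ℤ) ^ m) := by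
  have summand_le (t) (ht : t ∈ admissibleTriples F d.1 d.2.1 d.2.2) :
      |∑ x : K with x ^ Fintype.card F ^ m ≠ x, quadraticChar K (aeval x (t.1 * t.2.1))| ≤
        336 * m * (Fintype.card F : ℤ) ^ m := by
    simp only [mem_admissibleTriples, mem_monicsOfDegree] at ht
    obtain ⟨⟨⟨monic₁, deg₁⟩, ⟨monic₂, deg₂⟩, -⟩, sqf₁, sqf₂, -, cop, -⟩ := ht
    have hdeg : (t.1 * t.2.1).natDegree = d.1 + d.2.1 := by
      rw [monic₁.natDegree_mul monic₂, deg₁, deg₂]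
    refine (abs_sum_quadraticChar_aeval_not_fixed_le hF hK
      (squarefree_mul_iff.2 ⟨cop.isRelPrime, sqf₁, sqf₂⟩)
      (hdeg ▸ one_le_of_mem_admissibleDegrees hd)).trans ?_
    rw [hdeg]
    gcongr
    push_cast
    omega
  have card_le : (admissibleTriples F d.1 d.2.1 d.2.2).card ≤ Fintype.card F ^ (g + 3) :=
    (card_admissibleTriples_le _ _ _).trans <|
      Nat.pow_le_pow_right Fintype.card_pos (sum_le_of_mem_admissibleDegrees hd)
  refine (Finset.abs_sum_le_sum_abs _ _).trans
    ((Finset.sum_le_card_nsmul _ _ _ summand_le).trans ?_)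
  rw [nsmul_eq_mul]
  gcongr
  exact_mod_cast card_le

lemma abs_sum_admissibleTriples_quadraticChar_mul_pow_le (hF : Odd (Fintype.card F))
    (hK : Fintype.card K = (Fintype.card F ^ m) ^ 2) {x : K} (hx : x ^ Fintype.card F ^ m ≠ x)
    {d₁ d₂ d₃ : ℕ} (hsum : d₁ + d₂ + d₃ ≤ g + 3) (h₁ : 12 * m ≤ d₁) :
    |((∑ t ∈ admissibleTriples F d₁ d₂ d₃, quadraticChar K (aeval x (t.1 * t.2.1)) : ℤ) : ℝ)| *
      ((Fintype.card F : ℝ) ^ m) ^ 5 ≤ (Fintype.card F : ℝ) ^ (g + 3) * (g + 4) ^ 3 := by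
  let ψ : F[X] →* ℤ :=
    (quadraticChar K).toMonoidHom.comp (aeval x : F[X] →ₐ[F] K).toRingHom.toMonoidHom
  have hψ (f : F[X]) : |ψ f| ≤ 1 := by
    change |quadraticChar K (aeval x f)| ≤ 1
    simpa only [Finset.sum_singleton, Finset.card_singleton, Nat.cast_one] using
      abs_sum_quadraticChar_le_card {x} fun x => aeval x f
  have sieve := abs_sum_admissibleTriples_le hψ
    (fun e he => sum_monicsOfDegree_quadraticChar_aeval_eq_zero hF hK hx he) d₁ d₂ d₃
  set q : ℝ := (Fintype.card F : ℝ)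
  have hq : 1 ≤ q := Nat.one_le_cast.2 Fintype.card_pos
  have sqrt_pow (k : ℕ) : q ^ k = √q ^ (2 * k) := by rw [pow_mul, Real.sq_sqrt (by positivity)]
  have cofactor_le : ((d₁ : ℝ) + 1) * (d₂ + 1) * (d₃ + 1) ≤ (g + 4) ^ 3 := by
    rw [pow_three, ← mul_assoc]
    gcongr ?_ * ?_ * ?_ <;> norm_cast <;> omega
  calc _ ≤ √q ^ (d₁ + 2 * m) * q ^ (d₂ + d₃) * ((d₁ + 1) * (d₂ + 1) * (d₃ + 1)) * (q ^ m) ^ 5 := by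
        gcongr
        exact sieve
    _ = √q ^ (d₁ + 12 * m + 2 * (d₂ + d₃)) * ((d₁ + 1) * (d₂ + 1) * (d₃ + 1)) := by
        rw [← pow_mul, sqrt_pow, sqrt_pow]; ring
    _ ≤ √q ^ (2 * (g + 3)) * (g + 4) ^ 3 := by
        gcongr
        · exact Real.one_le_sqrt.2 hq
        · omega
    _ = q ^ (g + 3) * (g + 4) ^ 3 := by rw [sqrt_pow]

lemma abs_sum_admissibleTriples_quadraticChar_le_of_le (hF : Odd (Fintype.card F))
    (hK : Fintype.card K = (Fintype.card F ^ m) ^ 2) {d : ℕ × ℕ × ℕ}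
    (hd : d ∈ admissibleDegrees g) (hlarge : ¬(d.1 < 12 * m ∧ d.2.1 < 12 * m)) :
    |((∑ t ∈ admissibleTriples F d.1 d.2.1 d.2.2, ∑ x : K with x ^ Fintype.card F ^ m ≠ x,
      quadraticChar K (aeval x (t.1 * t.2.1)) : ℤ) : ℝ)| ≤
      (Fintype.card F : ℝ) ^ (g + 3) * (g + 4) ^ 3 / ((Fintype.card F : ℝ) ^ m) ^ 3 := by
  have hsum := sum_le_of_mem_admissibleDegrees hd
  have summand_le (x : K) (hx : x ∈ Finset.univ.filter fun x : K => x ^ Fintype.card F ^ m ≠ x) :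
      |((∑ t ∈ admissibleTriples F d.1 d.2.1 d.2.2,
        quadraticChar K (aeval x (t.1 * t.2.1)) : ℤ) : ℝ)| ≤
        (Fintype.card F : ℝ) ^ (g + 3) * (g + 4) ^ 3 / ((Fintype.card F : ℝ) ^ m) ^ 5 := by
    have hx := (Finset.mem_filter.1 hx).2
    rw [le_div_iff₀ (by have := Fintype.card_pos (α := F); positivity)]
    rcases le_or_gt (12 * m) d.1 with h₁ | h₁
    · exact abs_sum_admissibleTriples_quadraticChar_mul_pow_le hF hK hx hsum h₁
    · rw [sum_admissibleTriples_swap]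
      simp only [mul_comm (Prod.fst (Prod.snd _)) (Prod.fst _)]
      exact abs_sum_admissibleTriples_quadraticChar_mul_pow_le hF hK hx (by omega) (by omega)
  have card_le : ((Finset.univ.filter fun x : K => x ^ Fintype.card F ^ m ≠ x).card : ℝ) ≤
      ((Fintype.card F : ℝ) ^ m) ^ 2 := by
    have := Finset.card_filter_le Finset.univ fun x : K => x ^ Fintype.card F ^ m ≠ x
    rw [Finset.card_univ, hK] at this
    exact_mod_cast this
  rw [Finset.sum_comm, Int.cast_sum]
  refine (Finset.abs_sum_le_sum_abs _ _).trans
    ((Finset.sum_le_card_nsmul _ _ _ summand_le).trans ?_)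
  rw [nsmul_eq_mul]
  refine (mul_le_mul_of_nonneg_right card_le (by positivity)).trans_eq ?_
  have := Fintype.card_pos (α := F)
  field_simp

lemma abs_sum_monicFamily_fixed_sub_le (hF : Odd (Fintype.card F))
    (hK : Fintype.card K = (Fintype.card F ^ m) ^ 2) (g : ℕ) :
    |∑ t ∈ monicFamily F g, ∑ x : K with x ^ Fintype.card F ^ m = x,
      quadraticChar K (aeval x (t.1 * t.2.1)) -
        (Fintype.card F : ℤ) ^ m * (monicFamily F g).card| ≤ (g + 3) * (monicFamily F g).card := by
  have summand_le (t) (ht : t ∈ monicFamily F g) :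
      |∑ x : K with x ^ Fintype.card F ^ m = x, quadraticChar K (aeval x (t.1 * t.2.1)) -
        (Fintype.card F : ℤ) ^ m| ≤ (g : ℤ) + 3 := by
    rw [monicFamily, Finset.mem_biUnion] at ht
    obtain ⟨d, hd, ht⟩ := ht
    simp only [mem_admissibleTriples, mem_monicsOfDegree] at ht
    obtain ⟨⟨⟨monic₁, deg₁⟩, ⟨monic₂, deg₂⟩, -⟩, -⟩ := ht
    refine (abs_sum_quadraticChar_aeval_fixed_sub_le hF hK (monic₁.mul monic₂).ne_zero).trans ?_
    rw [monic₁.natDegree_mul monic₂, deg₁, deg₂]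
    have := sum_le_of_mem_admissibleDegrees hd
    push_cast
    omega
  calc _ = |∑ t ∈ monicFamily F g, (∑ x : K with x ^ Fintype.card F ^ m = x,
        quadraticChar K (aeval x (t.1 * t.2.1)) - (Fintype.card F : ℤ) ^ m)| := by
        rw [Finset.sum_sub_distrib, Finset.sum_const, nsmul_eq_mul, mul_comm]
    _ ≤ (monicFamily F g).card • ((g : ℤ) + 3) :=
        (Finset.abs_sum_le_sum_abs _ _).trans (Finset.sum_le_card_nsmul _ _ _ summand_le)
    _ = (g + 3) * (monicFamily F g).card := by rw [nsmul_eq_mul, mul_comm]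

lemma abs_sum_monicFamily_not_fixed_le (hF : Odd (Fintype.card F))
    (hK : Fintype.card K = (Fintype.card F ^ m) ^ 2) (g : ℕ) :
    |((∑ t ∈ monicFamily F g, ∑ x : K with x ^ Fintype.card F ^ m ≠ x,
      quadraticChar K (aeval x (t.1 * t.2.1)) : ℤ) : ℝ)| ≤
      2 * (12 * m) ^ 2 * ((Fintype.card F : ℝ) ^ (g + 3) * (336 * m * (Fintype.card F : ℝ) ^ m)) +
      (g + 4) ^ 3 *
        ((Fintype.card F : ℝ) ^ (g + 3) * (g + 4) ^ 3 / ((Fintype.card F : ℝ) ^ m) ^ 3) := by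
  rw [sum_monicFamily, ← Finset.sum_filter_add_sum_filter_not (admissibleDegrees g)
    fun d => d.1 < 12 * m ∧ d.2.1 < 12 * m, Int.cast_add, Int.cast_sum, Int.cast_sum]
  refine (abs_add_le _ _).trans (add_le_add ?_ ?_)
  · refine (Finset.abs_sum_le_sum_abs _ _).trans ((Finset.sum_le_card_nsmul _ _
      ((Fintype.card F : ℝ) ^ (g + 3) * (336 * m * (Fintype.card F : ℝ) ^ m))
      fun d hd => ?_).trans ?_)
    · obtain ⟨hd, h₁, h₂⟩ := Finset.mem_filter.1 hd
      exact_mod_cast abs_sum_admissibleTriples_quadraticChar_le_of_lt hF hK hd h₁ h₂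
    · rw [nsmul_eq_mul]
      gcongr
      exact_mod_cast card_filter_admissibleDegrees_lt_le g (12 * m)
  · refine (Finset.abs_sum_le_sum_abs _ _).trans ((Finset.sum_le_card_nsmul _ _
      ((Fintype.card F : ℝ) ^ (g + 3) * (g + 4) ^ 3 / ((Fintype.card F : ℝ) ^ m) ^ 3)
      fun d hd => ?_).trans ?_)
    · obtain ⟨hd, hlarge⟩ := Finset.mem_filter.1 hd
      exact abs_sum_admissibleTriples_quadraticChar_le_of_le hF hK hd hlarge
    · rw [nsmul_eq_mul]
      gcongr
      exact_mod_cast (Finset.card_filter_le _ _).trans (card_admissibleDegrees_le g)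

lemma abs_sum_monicFamily_sub_le (hF : Odd (Fintype.card F))
    (hK : Fintype.card K = (Fintype.card F ^ m) ^ 2) (g : ℕ) :
    |((∑ t ∈ monicFamily F g, ∑ x : K, quadraticChar K (aeval x (t.1 * t.2.1)) : ℤ) : ℝ) -
      (Fintype.card F : ℝ) ^ m * (monicFamily F g).card| ≤
      (g + 3) * (monicFamily F g).card +
      (2 * (12 * m) ^ 2 *
        ((Fintype.card F : ℝ) ^ (g + 3) * (336 * m * (Fintype.card F : ℝ) ^ m)) +
      (g + 4) ^ 3 *
        ((Fintype.card F : ℝ) ^ (g + 3) * (g + 4) ^ 3 / ((Fintype.card F : ℝ) ^ m) ^ 3)) := by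
  have fixed := abs_sum_monicFamily_fixed_sub_le (F := F) (K := K) hF hK g
  rify at fixed
  simp only [← Finset.sum_filter_add_sum_filter_not Finset.univ
    (fun x : K => x ^ Fintype.card F ^ m = x), Finset.sum_add_distrib]
  rw [Int.cast_add, add_sub_right_comm]
  refine (abs_add_le _ _).trans (add_le_add ?_ (abs_sum_monicFamily_not_fixed_le hF hK g))
  push_cast
  exact fixed

variable (F K) in
/-- The average over the monic triples `(f₁, f₂, f₃)` in `F̂_g` of `∑ x ∈ K, χ₂((f₁ f₂)(x))`,
divided by its expected order of magnitude `q ^ m`. -/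
noncomputable def normalizedAverage (m g : ℕ) : ℝ :=
  ((∑ t ∈ monicFamily F g, ∑ x : K, quadraticChar K (aeval x (t.1 * t.2.1)) : ℤ) : ℝ) /
    ((Fintype.card F : ℝ) ^ m * (monicFamily F g).card)

lemma abs_normalizedAverage_sub_one_le (hF : Odd (Fintype.card F))
    (hK : Fintype.card K = (Fintype.card F ^ m) ^ 2) {c : ℝ} (hc : 0 < c) (hg : 4 ≤ g)
    (hcard : c * (g : ℝ) ^ 2 * (Fintype.card F : ℝ) ^ g ≤ (monicFamily F g).card) :
    |normalizedAverage F K m g - 1| ≤ 2 * (g / (Fintype.card F : ℝ) ^ m) +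
      96768 * (Fintype.card F : ℝ) ^ 3 / c * ((m : ℝ) ^ 3 / (g : ℝ) ^ 2) +
      64 * (Fintype.card F : ℝ) ^ 3 / c * (g / (Fintype.card F : ℝ) ^ m) ^ 4 := by
  have bound := abs_sum_monicFamily_sub_le (F := F) (K := K) hF hK g
  have hq : (0 : ℝ) < Fintype.card F := Nat.cast_pos.2 Fintype.card_pos
  have hg : (4 : ℝ) ≤ g := Nat.ofNat_le_cast.2 hg
  unfold normalizedAverage
  set q : ℝ := (Fintype.card F : ℝ)
  set N : ℝ := ((monicFamily F g).card : ℝ)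
  set W : ℝ :=
    ((∑ t ∈ monicFamily F g, ∑ x : K, quadraticChar K (aeval x (t.1 * t.2.1)) : ℤ) : ℝ)
  have hN : 0 < N := lt_of_lt_of_le (by positivity) hcard
  generalize hr : q ^ m = r at bound ⊢
  have hr : 0 < r := hr ▸ by positivity
  rw [div_sub_one (by positivity), abs_div, abs_of_pos (by positivity : 0 < r * N),
    div_le_iff₀ (by positivity)]
  calc |W - r * N| ≤ (g + 3) * N + (2 * (12 * m) ^ 2 * (q ^ (g + 3) * (336 * m * r)) +
        (g + 4) ^ 3 * (q ^ (g + 3) * (g + 4) ^ 3 / r ^ 3)) := bound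
    _ = (g + 3) * N + 96768 * q ^ 3 / c * (m ^ 3 / g ^ 2) * (r * (c * g ^ 2 * q ^ g)) +
        (g + 4) ^ 6 * (q ^ 3 / c) / g ^ 2 / r ^ 4 * (r * (c * g ^ 2 * q ^ g)) := by
        field_simp; ring
    _ ≤ (g + g) * N + 96768 * q ^ 3 / c * (m ^ 3 / g ^ 2) * (r * N) +
        (g + g) ^ 6 * (q ^ 3 / c) / g ^ 2 / r ^ 4 * (r * N) := by
        gcongr; linarith
    _ = _ := by field_simp; ring

end AverageOverMonicFamily

section Limits

variable {F : Type*} [Field F] [Fintype F] {n : ℕ → ℕ}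

lemma tendsto_cube_div_sq_of_tendsto_div_rpow
    (hn : Filter.Tendsto (fun g : ℕ => (n g : ℝ) / (g : ℝ) ^ ((2 : ℝ) / 3))
      Filter.atTop (nhds 0)) :
    Filter.Tendsto (fun g : ℕ => (n g : ℝ) ^ 3 / (g : ℝ) ^ 2) Filter.atTop (nhds 0) := by
  have cube := hn.pow 3
  rw [zero_pow three_ne_zero] at cube
  refine cube.congr fun g => ?_
  rw [div_pow, ← Real.rpow_mul_natCast (Nat.cast_nonneg g)]
  norm_num

lemma tendsto_div_pow_half_of_log_le {q : ℝ} (hq : 1 < q) (hn_even : ∀ g, Even (n g))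
    (hn : ∃ g₀ : ℕ, ∀ g : ℕ, g₀ ≤ g → 3 * Real.log g / Real.log q ≤ (n g : ℝ)) :
    Filter.Tendsto (fun g : ℕ => (g : ℝ) / q ^ (n g / 2)) Filter.atTop (nhds 0) := by
  obtain ⟨g₀, hg₀⟩ := hn
  have inv_sqrt : Filter.Tendsto (fun g : ℕ => (√(g : ℝ))⁻¹) Filter.atTop (nhds 0) :=
    (Real.tendsto_sqrt_atTop.comp tendsto_natCast_atTop_atTop).inv_tendsto_atTop
  refine squeeze_zero' (Filter.Eventually.of_forall fun g => by positivity) ?_ inv_sqrt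
  filter_upwards [Filter.eventually_ge_atTop (max g₀ 1)] with g hg
  have hg_pos : (0 : ℝ) < g := Nat.cast_pos.2 (by omega)
  have cube_le : (g : ℝ) ^ 3 ≤ (q ^ (n g / 2)) ^ 2 := by
    rw [← pow_mul, Nat.div_mul_cancel (hn_even g).two_dvd, ← Real.log_le_log_iff (by positivity)
      (by positivity), Real.log_pow, Real.log_pow]
    exact_mod_cast (div_le_iff₀ (Real.log_pos hq)).1 (hg₀ g (by omega))
  rw [div_le_iff₀ (by positivity), ← div_eq_inv_mul, le_div_iff₀ (by positivity)]
  refine le_of_sq_le_sq ?_ (by positivity)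
  rwa [mul_pow, Real.sq_sqrt hg_pos.le, ← pow_succ]

lemma tendsto_normalizedAverage (hF : Odd (Fintype.card F)) {m : ℕ → ℕ}
    (hm_low : Filter.Tendsto (fun g : ℕ => (g : ℝ) / (Fintype.card F : ℝ) ^ m g)
      Filter.atTop (nhds 0))
    (hm_up : Filter.Tendsto (fun g : ℕ => (m g : ℝ) ^ 3 / (g : ℝ) ^ 2) Filter.atTop (nhds 0))
    (K : ℕ → Type*) [∀ g, Field (K g)] [∀ g, Fintype (K g)] [∀ g, Algebra F (K g)]
    (hK : ∀ g, Fintype.card (K g) = (Fintype.card F ^ m g) ^ 2) :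
    Filter.Tendsto (fun g => normalizedAverage F (K g) (m g) g) Filter.atTop (nhds 1) := by
  obtain ⟨c, hc, hcard⟩ := exists_mul_sq_mul_pow_le_card_monicFamily F
  have error_tendsto := ((hm_low.const_mul 2).add
    (hm_up.const_mul (96768 * (Fintype.card F : ℝ) ^ 3 / c))).add
    ((hm_low.pow 4).const_mul (64 * (Fintype.card F : ℝ) ^ 3 / c))
  simp only [mul_zero, add_zero, ne_eq, OfNat.ofNat_ne_zero, not_false_eq_true, zero_pow]
    at error_tendsto
  rw [tendsto_iff_dist_tendsto_zero]
  refine squeeze_zero' (Filter.Eventually.of_forall fun g => dist_nonneg) ?_ error_tendsto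
  filter_upwards [hcard, Filter.eventually_ge_atTop 4] with g hcard_g hg
  exact abs_normalizedAverage_sub_one_le hF (hK g) hc hg hcard_g

end Limits

section Main

lemma quadCharFn_eq_quadraticChar {K : Type*} [Field K] [Fintype K] (a : K) :
    quadCharFn K a = quadraticChar K a := by
  simp only [quadCharFn, quadraticChar_apply, quadraticCharFun]
  congr

lemma finsum_FhatSet_quadCharFn {F K : Type*} [Field F] [Fintype F] [Field K] [Fintype K]
    [Algebra F K] {m : ℕ} (hF : Odd (Fintype.card F))
    (hK : Fintype.card K = (Fintype.card F ^ m) ^ 2) (g : ℕ) :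
    ∑ᶠ t ∈ FhatSet F g, ∑ x : K, (quadCharFn K (aeval x (t.1 * t.2.2)) +
        quadCharFn K (aeval x (t.2.1 * t.2.2)) + quadCharFn K (aeval x (t.1 * t.2.1))) =
      Fintype.card (Fˣ × Fˣ) *
        (3 * ∑ t ∈ monicFamily F g, ∑ x : K, quadraticChar K (aeval x (t.1 * t.2.1))) := by
  simp only [quadCharFn_eq_quadraticChar]
  rw [finsum_FhatSet]
  · have sum₂₃ := sum_monicFamily_swap_left (F := F) (g := g) fun t =>
      ∑ x : K, quadraticChar K (aeval x (t.2.1 * t.2.2))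
    have sum₁₃ := sum_monicFamily_swap_right (F := F) (g := g) fun t =>
      ∑ x : K, quadraticChar K (aeval x (t.1 * t.2.2))
    simp only [Finset.sum_add_distrib, sum₂₃, sum₁₃]
    ring
  · intro y
    simp only [scaleTriple, map_mul, aeval_C,
      quadraticChar_algebraMap_eq_one hF hK (Units.ne_zero _), one_mul]

theorem stmt14_general {F : Type*} [Field F] [Fintype F] (hF : Odd (Fintype.card F))
    {n : ℕ → ℕ} (hn_even : ∀ g, Even (n g))
    (hn_low : Filter.Tendsto (fun g : ℕ => (g : ℝ) / (Fintype.card F : ℝ) ^ (n g / 2))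
      Filter.atTop (nhds 0))
    (hn_up : Filter.Tendsto (fun g : ℕ => (n g : ℝ) / (g : ℝ) ^ ((2 : ℝ) / 3))
      Filter.atTop (nhds 0))
    (K : ℕ → Type*) [∀ g, Field (K g)] [∀ g, Fintype (K g)] [∀ g, Algebra F (K g)]
    (hK : ∀ g, Fintype.card (K g) = Fintype.card F ^ n g) :
    Filter.Tendsto (fun g : ℕ =>
        ((Fintype.card F : ℝ) ^ (n g / 2))⁻¹ / ((FhatSet F g).ncard : ℝ) *
          ((∑ᶠ t ∈ FhatSet F g, ∑ x : K g,
              (quadCharFn (K g) (aeval x (t.1 * t.2.2)) +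
                quadCharFn (K g) (aeval x (t.2.1 * t.2.2)) +
                quadCharFn (K g) (aeval x (t.1 * t.2.1))) : ℤ) : ℝ))
      Filter.atTop (nhds 3) := by
  have two_mul_half (g : ℕ) : n g / 2 * 2 = n g := Nat.div_mul_cancel (hn_even g).two_dvd
  have hK' (g : ℕ) : Fintype.card (K g) = (Fintype.card F ^ (n g / 2)) ^ 2 := by
    rw [hK, ← pow_mul, two_mul_half]
  have half_up : Filter.Tendsto (fun g : ℕ => ((n g / 2 : ℕ) : ℝ) ^ 3 / (g : ℝ) ^ 2)
      Filter.atTop (nhds 0) := by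
    refine squeeze_zero (fun g => by positivity) (fun g => ?_)
      (tendsto_cube_div_sq_of_tendsto_div_rpow hn_up)
    gcongr
    exact Nat.div_le_self _ _
  have average := (tendsto_normalizedAverage hF hn_low half_up K hK').const_mul 3
  rw [mul_one] at average
  refine average.congr fun g => ?_
  have units_ne_zero : ((Fintype.card (Fˣ × Fˣ) : ℕ) : ℝ) ≠ 0 :=
    Nat.cast_ne_zero.2 Fintype.card_ne_zero
  rw [finsum_FhatSet_quadCharFn hF (hK' g), ncard_FhatSet, normalizedAverage, Int.cast_mul,
    Int.cast_natCast, Nat.cast_mul, Int.cast_mul, Int.cast_ofNat]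
  field_simp

end Main

/-- for a sequence of even `n(g)` with `3·log_q g ≤ n(g)` for large `g` and
`n(g) = o(g^{2/3})`, the quantity
`(q^{-n(g)/2}/|F̂_g|)·Σ_{(f1,f2,f3) ∈ F̂_g} Σ_{x ∈ F_{q^{n(g)}}}
  [χ₂((f1f3)(x)) + χ₂((f2f3)(x)) + χ₂((f1f2)(x))]` tends to `3` as `g → ∞`. -/
theorem stmt14 (q : ℕ) (hq_odd : Odd q) (hq_pp : IsPrimePow q)
    (Fq : Type) [Field Fq] [Fintype Fq] (hFq : Fintype.card Fq = q)
    (n : ℕ → ℕ) (hn_even : ∀ g, Even (n g)) (hn_pos : ∀ g, 0 < n g)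
    (hn_low : ∃ g0 : ℕ, ∀ g : ℕ, g0 ≤ g → 3 * Real.log g / Real.log q ≤ (n g : ℝ))
    (hn_up : Filter.Tendsto (fun g : ℕ => (n g : ℝ) / (g : ℝ) ^ ((2 : ℝ) / 3))
      Filter.atTop (nhds 0))
    (K : ℕ → Type) [∀ g, Field (K g)] [∀ g, Fintype (K g)] [∀ g, Algebra Fq (K g)]
    (hK : ∀ g, Fintype.card (K g) = q ^ n g) :
    Filter.Tendsto (fun g : ℕ =>
        ((q : ℝ) ^ (n g / 2))⁻¹ / ((FhatSet Fq g).ncard : ℝ) *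
          ((∑ᶠ t ∈ FhatSet Fq g, ∑ x : K g,
              (quadCharFn (K g) (aeval x (t.1 * t.2.2)) +
                quadCharFn (K g) (aeval x (t.2.1 * t.2.2)) +
                quadCharFn (K g) (aeval x (t.1 * t.2.1))) : ℤ) : ℝ))
      Filter.atTop (nhds 3) := by
  subst hFq
  exact stmt14_general hq_odd hn_even (tendsto_div_pow_half_of_log_le
    (Nat.one_lt_cast.2 Fintype.one_lt_card) hn_even hn_low) hn_up K hK
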